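/- arXiv:2501.16647 — 2 statements merged into one kernel-verified Lean document; each statement's English description precedes it below -/
import Mathlib

section
/- Let s ∈ (3/2, 2) and α = s − 3/2. There is a constant C ≥ 0, depending only on s, such that every injective C¹ immersion γ : 𝕋 → ℝⁿ satisfies |D_γγ(y) − D_γγ(x)| ≤ C · √(E(γ)) · d_γ(x,y)^α for all x, y ∈ 𝕋. -/
open MeasureTheory Real Filter Set
open scoped ENNReal Topology RealInnerProductSpace

noncomputable section

/-- Euclidean space `ℝⁿ`. -/
abbrev En (n : ℕ) : Type := EuclideanSpace ℝ (Fin n)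

/-- A fundamental domain for the circle `𝕋 = ℝ/ℤ`. -/
def I01 : Set ℝ := Set.Ico (0 : ℝ) 1

/-- The intrinsic distance on `𝕋 = ℝ/ℤ`, expressed for real representatives. -/
def dT (x y : ℝ) : ℝ := ⨅ k : ℤ, |x - y - (k : ℝ)|

/-- Supremum norm of a (periodic) function on the circle. -/
def supNorm {E : Type*} [NormedAddCommGroup E] (f : ℝ → E) : ℝ := ⨆ x : ℝ, ‖f x‖

/-- The squared Gagliardo seminorm `[v]_{H^σ}²` of a function on the circle, valued in `[0,∞]`. -/
def gagliardoSqE {E : Type*} [NormedAddCommGroup E] (σ : ℝ) (v : ℝ → E) : ℝ≥0∞ :=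
  ∫⁻ x in I01, ∫⁻ y in I01, ENNReal.ofReal (‖v y - v x‖ ^ 2 / dT x y ^ (2 * σ + 1))

/-- Membership in the Sobolev–Slobodeckij space `H^s(𝕋, ℝⁿ)`; for `s ∈ (3/2,2)` such
functions have a `C¹` representative, which we take as the defining data. -/
def InHs {n : ℕ} (s : ℝ) (u : ℝ → En n) : Prop :=
  Function.Periodic u 1 ∧ ContDiff ℝ 1 u ∧ gagliardoSqE (s - 1) (deriv u) < ⊤

/-- The squared `H^s` norm `‖u‖²_{L²} + ‖u'‖²_{L²} + [u']²_{H^{s-1}}`. -/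
def HsNormSq {n : ℕ} (s : ℝ) (u : ℝ → En n) : ℝ :=
  (∫ x in I01, ‖u x‖ ^ 2) + (∫ x in I01, ‖deriv u x‖ ^ 2) +
    (gagliardoSqE (s - 1) (deriv u)).toReal

/-- The `H^s` norm. -/
def HsNorm {n : ℕ} (s : ℝ) (u : ℝ → En n) : ℝ := Real.sqrt (HsNormSq s u)

/-- The `H^s` inner product. -/
def HsInner {n : ℕ} (s : ℝ) (u v : ℝ → En n) : ℝ :=
  (∫ x in I01, ⟪u x, v x⟫) + (∫ x in I01, ⟪deriv u x, deriv v x⟫) +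
    ∫ x in I01, ∫ y in I01,
      ⟪deriv u y - deriv u x, deriv v y - deriv v x⟫ / dT x y ^ (2 * (s - 1) + 1)

/-- The manifold `𝓜` of embedded closed curves of class `H^s`: injective (on the circle)
immersions. -/
def InM {n : ℕ} (s : ℝ) (γ : ℝ → En n) : Prop :=
  InHs s γ ∧ Set.InjOn γ I01 ∧ ∀ x, deriv γ x ≠ 0

/-- The length `L(γ)`. -/
def arcLen {n : ℕ} (γ : ℝ → En n) : ℝ := ∫ x in I01, ‖deriv γ x‖

/-- The arc-length distance `d_γ(x,y)`: the length of the shorter of the two arcs of `γ`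
between `x` and `y`. -/
def arcDist {n : ℕ} (γ : ℝ → En n) (x y : ℝ) : ℝ :=
  ⨅ k : ℤ, |∫ t in x..(y + (k : ℝ)), ‖deriv γ t‖|

/-- Derivative with respect to arc length, `D_γ u = u' / |γ'|`. -/
def Dg {n : ℕ} (γ u : ℝ → En n) (x : ℝ) : En n := ‖deriv γ x‖⁻¹ • deriv u x

/-- `𝒟_γ u (x)`, the pointwise linear map `w ↦ |γ'(x)|⁻² ⟪γ'(x), w⟫ u'(x)`. -/
def DDg {n : ℕ} (γ u : ℝ → En n) (x : ℝ) (w : En n) : En n :=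
  ((‖deriv γ x‖ ^ 2)⁻¹ * ⟪deriv γ x, w⟫) • deriv u x

/-- The operator `R^s_γ`. -/
def Rop {n : ℕ} (s : ℝ) (γ u : ℝ → En n) (x y : ℝ) : En n :=
  (‖γ y - γ x‖ ^ s)⁻¹ • (u y - u x - DDg γ u x (γ y - γ x))

/-- Density of the measure `μ_γ` with respect to `λ ⊗ λ` on `𝕋 × 𝕋`. -/
def muW {n : ℕ} (γ : ℝ → En n) (x y : ℝ) : ℝ :=
  ‖deriv γ x‖ * ‖deriv γ y‖ / ‖γ y - γ x‖

/-- Density of the measure `ν_γ` with respect to `λ ⊗ λ` on `𝕋 × 𝕋`. -/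
def nuW {n : ℕ} (γ : ℝ → En n) (x y : ℝ) : ℝ :=
  ‖deriv γ x‖ * ‖deriv γ y‖ / arcDist γ x y

/-- The tangent-point energy, valued in `[0,∞]`. -/
def EtpE {n : ℕ} (s : ℝ) (γ : ℝ → En n) : ℝ≥0∞ :=
  ∫⁻ x in I01, ∫⁻ y in I01, ENNReal.ofReal (‖Rop s γ γ x y‖ ^ 2 * muW γ x y)

/-- The tangent-point energy, real-valued (finite on `𝓜`). -/
def Etp {n : ℕ} (s : ℝ) (γ : ℝ → En n) : ℝ := (EtpE s γ).toReal

/-- `‖R^s_γ u‖²_{L²(ν_γ)}`, valued in `[0,∞]`. -/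
def RnuSqE {n : ℕ} (s : ℝ) (γ u : ℝ → En n) : ℝ≥0∞ :=
  ∫⁻ x in I01, ∫⁻ y in I01, ENNReal.ofReal (‖Rop s γ u x y‖ ^ 2 * nuW γ x y)

/-- `‖R^s_γ u‖²_{L²(ν_γ)}`, real-valued. -/
def RnuSq {n : ℕ} (s : ℝ) (γ u : ℝ → En n) : ℝ := (RnuSqE s γ u).toReal

/-- The squared `γ`-dependent seminorm `[u]²_{H^s(γ)}`, valued in `[0,∞]`. -/
def gagGammaSqE {n : ℕ} (s : ℝ) (γ u : ℝ → En n) : ℝ≥0∞ :=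
  ∫⁻ x in I01, ∫⁻ y in I01,
    ENNReal.ofReal (‖Dg γ u y - Dg γ u x‖ ^ 2 / arcDist γ x y ^ (2 * (s - 1)) * nuW γ x y)

/-- The squared `γ`-dependent seminorm `[u]²_{H^s(γ)}`, real-valued. -/
def gagGammaSq {n : ℕ} (s : ℝ) (γ u : ℝ → En n) : ℝ := (gagGammaSqE s γ u).toReal

/-- The inner product `⟨u,v⟩_{L²(γ)}`. -/
def innerL2g {n : ℕ} (γ u v : ℝ → En n) : ℝ := ∫ x in I01, ⟪u x, v x⟫ * ‖deriv γ x‖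

/-- The inner product `⟨u,v⟩_{H¹(γ)}`. -/
def innerH1g {n : ℕ} (γ u v : ℝ → En n) : ℝ :=
  ∫ x in I01, ⟪Dg γ u x, Dg γ v x⟫ * ‖deriv γ x‖

/-- The squared `γ`-dependent norm `‖u‖²_{H^s(γ)}`. -/
def HsGammaNormSq {n : ℕ} (s : ℝ) (γ u : ℝ → En n) : ℝ :=
  innerL2g γ u u + innerH1g γ u u + gagGammaSq s γ u

/-- The `γ`-dependent norm `‖u‖_{H^s(γ)}`. -/
def HsGammaNorm {n : ℕ} (s : ℝ) (γ u : ℝ → En n) : ℝ := Real.sqrt (HsGammaNormSq s γ u)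

/-- The bilinear form `B¹_γ`. -/
def B1 {n : ℕ} (s : ℝ) (γ u v : ℝ → En n) : ℝ :=
  ∫ x in I01, ∫ y in I01, ⟪Rop s γ u x y, Rop s γ v x y⟫ * muW γ x y

/-- The bilinear form `B²_γ`. -/
def B2 {n : ℕ} (s : ℝ) (γ u v : ℝ → En n) : ℝ :=
  ∫ x in I01, ∫ y in I01,
    ‖Rop s γ γ x y‖ ^ 2 * (⟪u y - u x, v y - v x⟫ / ‖γ y - γ x‖ ^ 2) * muW γ x y

/-- The bilinear form `B³_γ`. -/
def B3 {n : ℕ} (s : ℝ) (γ u v : ℝ → En n) : ℝ :=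
  ∫ x in I01, ∫ y in I01,
    ‖Rop s γ γ x y‖ ^ 2 * (⟪Dg γ u x, Dg γ v x⟫ + ⟪Dg γ u y, Dg γ v y⟫) * muW γ x y

/-- The Riemannian metric `G_γ(u,v)`. -/
def Gmet {n : ℕ} (s : ℝ) (γ u v : ℝ → En n) : ℝ :=
  2 * B1 s γ u v + (2 * s + 1) * B2 s γ u v + B3 s γ u v + innerH1g γ u v + innerL2g γ u v

/-- The distortion `distor(γ) = sup_{x ≠ y} d_γ(x,y)/|γ(y) − γ(x)|`, valued in `[0,∞]`. -/
def distorE {n : ℕ} (γ : ℝ → En n) : ℝ≥0∞ :=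
  ⨆ (x ∈ I01) (y ∈ I01) (_ : x ≠ y), ENNReal.ofReal (arcDist γ x y / ‖γ y - γ x‖)

/-- The distortion, real-valued. -/
def distor {n : ℕ} (γ : ℝ → En n) : ℝ := (distorE γ).toReal

/-- A `C¹` path `[0,1] → 𝓜 ⊂ H^s(𝕋,ℝⁿ)` (with respect to the `H^s` topology), recorded
together with its velocity field `V`. -/
structure C1Path (s : ℝ) (n : ℕ) where
  Γ : ℝ → ℝ → En n
  V : ℝ → ℝ → En n
  mem : ∀ t ∈ Set.Icc (0 : ℝ) 1, InM s (Γ t)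
  memV : ∀ t ∈ Set.Icc (0 : ℝ) 1, InHs s (V t)
  isDeriv : ∀ t ∈ Set.Icc (0 : ℝ) 1,
    Tendsto (fun h : ℝ => HsNorm s fun x => h⁻¹ • (Γ (t + h) x - Γ t x) - V t x)
      (𝓝[{h : ℝ | t + h ∈ Set.Icc (0 : ℝ) 1 ∧ h ≠ 0}] 0) (𝓝 0)
  contV : ∀ t ∈ Set.Icc (0 : ℝ) 1,
    Tendsto (fun τ : ℝ => HsNorm s fun x => V τ x - V t x) (𝓝[Set.Icc (0 : ℝ) 1] t) (𝓝 0)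

/-- Length of a path with respect to `G`. -/
def pathLen {s : ℝ} {n : ℕ} (P : C1Path s n) : ℝ :=
  ∫ t in (0 : ℝ)..1, Real.sqrt (Gmet s (P.Γ t) (P.V t) (P.V t))

/-- The path (Dirichlet) energy of a path with respect to `G`. -/
def pathEnergy {s : ℝ} {n : ℕ} (P : C1Path s n) : ℝ :=
  (1 / 2) * ∫ t in (0 : ℝ)..1, Gmet s (P.Γ t) (P.V t) (P.V t)

/-- The geodesic distance induced by `G`, valued in `[0,∞]` (`∞` if there is no path). -/
def geodDist (s : ℝ) {n : ℕ} (γ₀ γ₁ : ℝ → En n) : ℝ≥0∞ :=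
  ⨅ (P : C1Path s n) (_ : P.Γ 0 = γ₀ ∧ P.Γ 1 = γ₁), ENNReal.ofReal (pathLen P)

/-- `U ⊆ 𝓜` is bounded with respect to the geodesic distance `d_G`. -/
def GBounded (s : ℝ) {n : ℕ} (U : Set (ℝ → En n)) : Prop :=
  (∀ γ ∈ U, InM s γ) ∧
    ∃ γ₀, InM s γ₀ ∧ ∃ R : ℝ, ∀ γ ∈ U, geodDist s γ γ₀ ≤ ENNReal.ofReal R

/-- Weak convergence in the Hilbert space `H^s(𝕋,ℝⁿ)`. -/
def WeakHsTendsto {n : ℕ} (s : ℝ) (γk : ℕ → ℝ → En n) (γ : ℝ → En n) : Prop :=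
  ∀ v : ℝ → En n, InHs s v →
    Tendsto (fun k => HsInner s (γk k) v) atTop (𝓝 (HsInner s γ v))

/-- Directional derivative of `γ ↦ G_γ(u,v)` at `γ` in direction `w`. -/
def DGdir {n : ℕ} (s : ℝ) (γ w u v : ℝ → En n) : ℝ :=
  deriv (fun t : ℝ => Gmet s (fun x => γ x + t • w x) u v) 0

/-- `F'` is the derivative of the path `F` with respect to the `H^s` norm, on `S`. -/
def IsHsDerivOn {n : ℕ} (s : ℝ) (F F' : ℝ → ℝ → En n) (S : Set ℝ) : Prop :=
  ∀ t ∈ S,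
    Tendsto (fun h : ℝ => HsNorm s fun x => h⁻¹ • (F (t + h) x - F t x) - F' t x)
      (𝓝[{h : ℝ | t + h ∈ S ∧ h ≠ 0}] 0) (𝓝 0)

/-- The path `F` is continuous on `S` with respect to the `H^s` norm. -/
def HsContOn {n : ℕ} (s : ℝ) (F : ℝ → ℝ → En n) (S : Set ℝ) : Prop :=
  ∀ t ∈ S, Tendsto (fun τ : ℝ => HsNorm s fun x => F τ x - F t x) (𝓝[S] t) (𝓝 0)

/-- A solution of the geodesic initial value problem on `[0,∞)`, recorded as a triple
(position `Γ`, velocity `V`, acceleration `W`); the geodesic equation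
`Γ̈ + A_Γ(Γ̇)Γ̇ = 0` is expressed weakly via the Koszul formula for the
Christoffel operator `A`. -/
def GeodesicSol {n : ℕ} (s : ℝ) (γ₀ v₀ : ℝ → En n) (Γ V W : ℝ → ℝ → En n) : Prop :=
  (∀ t ∈ Set.Ici (0 : ℝ), InM s (Γ t) ∧ InHs s (V t) ∧ InHs s (W t)) ∧
  Γ 0 = γ₀ ∧ V 0 = v₀ ∧
  IsHsDerivOn s Γ V (Set.Ici 0) ∧ IsHsDerivOn s V W (Set.Ici 0) ∧
  HsContOn s V (Set.Ici 0) ∧ HsContOn s W (Set.Ici 0) ∧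
  ∀ t ∈ Set.Ici (0 : ℝ), ∀ w : ℝ → En n, InHs s w →
    Gmet s (Γ t) (W t) w + DGdir s (Γ t) (V t) (V t) w
      - (1 / 2) * DGdir s (Γ t) w (V t) (V t) = 0

/-!
The idea is to run Campanato's argument on the unit tangent `T` of the arc-length parametrisation
`c`, with means replaced by directions of chords. If `w` is a chord of an arc of length `l` along
which `T` turns by at most `π / 3`, then `‖T u - w / ‖w‖‖` is at most a constant times
`‖w - ⟪T u, w⟫ T u‖ / ‖w‖`, and `‖w‖` is comparable to `l`. Writing `w` as the difference of the two
chords from `c u` to its endpoints, and choosing these endpoints by averaging over the first and the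
last third of the arc, bounds the integral of `‖T u - w / ‖w‖‖ ^ 2` over the arc by a multiple of
`E(γ) l ^ (2 s - 2)`. By Chebyshev, `T` is within a multiple of `√E(γ) l ^ (s - 3 / 2)` of `w / ‖w‖`
on most of the arc. Comparing these centres along nested arcs shrinking to a point sums a geometric
series and gives the Hölder bound. The smallness of the turning comes for free: at the first place
where `T` has moved by `1 / 2`, the bound is already comparable to the trivial one, which is `2`.
-/

section Oscillation

variable {X : Type*} [PseudoMetricSpace X]

/-- `f` stays within distance `r` of the value `y` on the interval `(a, b]`, up to a set filling at
most a quarter of it. This is the weak form of a small mean oscillation; the quarter makes the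
approximate values of an interval and of one of its halves comparable. -/
def IsNearlyConstOn (f : ℝ → X) (y : X) (r a b : ℝ) : Prop :=
  volume {x ∈ Ioc a b | r < dist (f x) y} ≤ ENNReal.ofReal ((b - a) / 4)

lemma IsNearlyConstOn.exists_dist_le {f : ℝ → X} {y y' : X} {r r' a b a' b' : ℝ}
    (h : IsNearlyConstOn f y r a b) (h' : IsNearlyConstOn f y' r' a' b')
    (hab' : a' < b') (hsub : Ioc a' b' ⊆ Ioc a b) (hlen : b - a ≤ 2 * (b' - a')) :
    ∃ x ∈ Ioc a' b', dist (f x) y ≤ r ∧ dist (f x) y' ≤ r' := by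
  by_contra! hfar
  have hcover : Ioc a' b' ⊆ {x ∈ Ioc a b | r < dist (f x) y} ∪
      {x ∈ Ioc a' b' | r' < dist (f x) y'} := fun x hx =>
    (lt_or_ge r (dist (f x) y)).imp (⟨hsub hx, ·⟩) fun hle => ⟨hx, hfar x hx hle⟩
  have hvol : ENNReal.ofReal (b' - a') ≤
      ENNReal.ofReal ((b - a) / 4) + ENNReal.ofReal ((b' - a') / 4) := by
    rw [← Real.volume_Ioc]
    exact ((measure_mono hcover).trans (measure_union_le _ _)).trans (add_le_add h h')
  have hba : 0 ≤ b - a := by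
    have hb' := hsub (right_mem_Ioc.2 hab')
    linarith [hb'.1, hb'.2]
  rw [← ENNReal.ofReal_add (by linarith) (by linarith),
    ENNReal.ofReal_le_ofReal_iff (by linarith)] at hvol
  linarith

lemma dist_approxValue_le_of_nested {f : ℝ → X} {m : ℕ → X} {a b : ℕ → ℝ} {p R q : ℝ}
    (hR : 0 ≤ R) (hq0 : 0 ≤ q) (hq1 : q < 1) (ha : Monotone a) (hb : Antitone b)
    (hab : ∀ k, a k < b k) (hhalf : ∀ k, b k - a k ≤ 2 * (b (k + 1) - a (k + 1)))
    (ha_tendsto : Tendsto a atTop (𝓝 p)) (hb_tendsto : Tendsto b atTop (𝓝 p))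
    (hf : ContinuousWithinAt f (Icc (a 0) (b 0)) p)
    (hm : ∀ k, IsNearlyConstOn f (m k) (R * q ^ k) (a k) (b k)) :
    dist (m 0) (f p) ≤ 2 * R / (1 - q) := by
  choose x hx hx_near hx_near' using fun k => (hm k).exists_dist_le (hm (k + 1)) (hab (k + 1))
    (Ioc_subset_Ioc (ha k.le_succ) (hb k.le_succ)) (hhalf k)
  have hconsecutive k : dist (m k) (m (k + 1)) ≤ 2 * R * q ^ k := by
    have hpow : R * q ^ (k + 1) ≤ R * q ^ k :=
      mul_le_mul_of_nonneg_left (pow_le_pow_of_le_one hq0 hq1.le k.le_succ) hR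
    linarith [dist_triangle_left (m k) (m (k + 1)) (f (x k)), hx_near k, hx_near' k]
  have hx_tendsto : Tendsto x atTop (𝓝[Icc (a 0) (b 0)] p) := by
    refine tendsto_nhdsWithin_iff.2 ⟨?_, .of_forall fun k =>
      ⟨(ha (k + 1).zero_le).trans (hx k).1.le, (hx k).2.trans (hb (k + 1).zero_le)⟩⟩
    exact tendsto_of_tendsto_of_tendsto_of_le_of_le ha_tendsto hb_tendsto
      (fun k => (ha k.le_succ).trans (hx k).1.le) (fun k => (hx k).2.trans (hb k.le_succ))
  have hdist_tendsto : Tendsto (fun k => dist (f (x k)) (m k)) atTop (𝓝 0) := by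
    refine squeeze_zero (fun _ => dist_nonneg) hx_near ?_
    simpa using (tendsto_pow_atTop_nhds_zero_of_lt_one hq0 hq1).const_mul R
  exact dist_le_of_le_geometric_of_tendsto₀ _ _ hq1 hconsecutive
    ((tendsto_iff_of_dist hdist_tendsto).1 (hf.tendsto.comp hx_tendsto))

lemma dist_approxValue_le {f : ℝ → X} {m : ℝ → ℝ → X} {K α A B p : ℝ} (hα : 0 < α) (hK : 0 ≤ K)
    (hAB : A < B) (hp : p ∈ Icc A B) (hf : ContinuousWithinAt f (Icc A B) p)
    (hm : ∀ a b, A ≤ a → a < b → b ≤ B → IsNearlyConstOn f (m a b) (K * (b - a) ^ α) a b) :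
    dist (m A B) (f p) ≤ 2 * (K * (B - A) ^ α) / (1 - (1 / 2) ^ α) := by
  set a : ℕ → ℝ := fun k => p - (1 / 2) ^ k * (p - A) with ha_def
  set b : ℕ → ℝ := fun k => p + (1 / 2) ^ k * (B - p) with hb_def
  have hpow_anti : Antitone fun k : ℕ => (1 / 2 : ℝ) ^ k :=
    pow_right_anti₀ (by norm_num) (by norm_num)
  have hpow_tendsto : Tendsto (fun k : ℕ => (1 / 2 : ℝ) ^ k) atTop (𝓝 0) :=
    tendsto_pow_atTop_nhds_zero_of_lt_one (by norm_num) (by norm_num)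
  have ha : Monotone a := fun _ _ hij =>
    sub_le_sub_left (hpow_anti.mul_const (sub_nonneg.2 hp.1) hij) p
  have hb : Antitone b := (hpow_anti.mul_const (sub_nonneg.2 hp.2)).const_add p
  have ha0 : a 0 = A := by simp [ha_def]
  have hb0 : b 0 = B := by simp [hb_def]
  have hlen k : b k - a k = (1 / 2) ^ k * (B - A) := by simp only [ha_def, hb_def]; ring
  have hab k : a k < b k := by
    rw [← sub_pos, hlen]
    exact mul_pos (by positivity) (sub_pos.2 hAB)
  have hradius k : K * (b k - a k) ^ α = K * (B - A) ^ α * ((1 / 2) ^ α) ^ k := by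
    rw [hlen, Real.mul_rpow (by positivity) (sub_pos.2 hAB).le, Real.rpow_pow_comm (by norm_num)]
    ring
  simpa only [ha0, hb0] using dist_approxValue_le_of_nested (m := fun k => m (a k) (b k))
    (mul_nonneg hK (Real.rpow_nonneg (sub_pos.2 hAB).le α)) (by positivity)
    (Real.rpow_lt_one (by norm_num) (by norm_num) hα) ha hb hab
    (fun k => by rw [hlen, hlen, pow_succ]; linarith)
    (by simpa [ha_def] using (hpow_tendsto.mul_const (p - A)).const_sub p)
    (by simpa [hb_def] using (hpow_tendsto.mul_const (B - p)).const_add p)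
    (by rwa [ha0, hb0])
    fun k => hradius k ▸ hm _ _ (ha0 ▸ ha k.zero_le) (hab k) (hb0 ▸ hb k.zero_le)

/-- A weak-type form of Campanato's characterisation of Hölder continuity. -/
theorem dist_le_of_forall_isNearlyConstOn {f : ℝ → X} {K α A B : ℝ} (hα : 0 < α) (hK : 0 ≤ K)
    (hAB : A < B) (hf : ContinuousOn f (Icc A B))
    (h : ∀ a b, A ≤ a → a < b → b ≤ B → ∃ y, IsNearlyConstOn f y (K * (b - a) ^ α) a b) :
    dist (f A) (f B) ≤ 4 * K * (B - A) ^ α / (1 - (1 / 2) ^ α) := by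
  have : Nonempty X := ⟨f A⟩
  choose! m hm using h
  have hbound p (hp : p ∈ Icc A B) := dist_approxValue_le hα hK hAB hp (hf p hp) hm
  refine (dist_triangle_left _ _ (m A B)).trans ((add_le_add (hbound A (left_mem_Icc.2 hAB.le))
    (hbound B (right_mem_Icc.2 hAB.le))).trans_eq ?_)
  ring

end Oscillation

section Averages

lemma exists_mem_Ioc_le_of_setLIntegral_le {g : ℝ → ℝ≥0∞} {a b K : ℝ} (hab : a < b)
    (hg : AEMeasurable g (volume.restrict (Ioc a b)))
    (h : ∫⁻ x in Ioc a b, g x ≤ ENNReal.ofReal K) :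
    ∃ x ∈ Ioc a b, g x ≤ ENNReal.ofReal (K / (b - a)) := by
  obtain ⟨x, hx, hgx⟩ := exists_le_setLAverage (μ := volume) (s := Ioc a b)
    (by simpa using hab) (by simp) hg
  refine ⟨x, hx, hgx.trans ?_⟩
  rw [setLAverage_eq, Real.volume_Ioc, ENNReal.ofReal_div_of_pos (sub_pos.2 hab)]
  gcongr

lemma measure_lt_le_of_lintegral_le_mul {Ω : Type*} [MeasurableSpace Ω] {μ : Measure Ω}
    {g : Ω → ℝ≥0∞} (hg : AEMeasurable g μ) {r M : ℝ≥0∞} (h : ∫⁻ x, g x ∂μ ≤ r * M) :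
    μ {x | r < g x} ≤ M := by
  rcases eq_or_ne r 0 with rfl | hr0
  · have hg0 : g =ᵐ[μ] 0 := (lintegral_eq_zero_iff' hg).1 (by simpa using h)
    exact (measure_mono_null (fun x (hx : 0 < g x) => hx.ne') (ae_iff.1 hg0)).trans_le zero_le
  rcases eq_or_ne r ⊤ with rfl | hr_top
  · simp
  · calc μ {x | r < g x} ≤ μ {x | r ≤ g x} := measure_mono fun x (hx : r < g x) => hx.le
      _ ≤ (∫⁻ x, g x ∂μ) / r := meas_ge_le_lintegral_div hg hr0 hr_top
      _ ≤ M := ENNReal.div_le_of_le_mul' h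

lemma isNearlyConstOn_of_setLIntegral_sq_le {X : Type*} [PseudoMetricSpace X] {f : ℝ → X} {y : X}
    {r a b : ℝ} (hf : Continuous f) (hr : 0 ≤ r)
    (h : ∫⁻ x in Ioc a b, ENNReal.ofReal (dist (f x) y ^ 2) ≤
      ENNReal.ofReal (r ^ 2) * ENNReal.ofReal ((b - a) / 4)) :
    IsNearlyConstOn f y r a b := by
  have hmeas : Measurable fun x => ENNReal.ofReal (dist (f x) y ^ 2) :=
    ((hf.dist continuous_const).pow 2).measurable.ennreal_ofReal
  refine le_trans ?_ (measure_lt_le_of_lintegral_le_mul hmeas.aemeasurable h)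
  rw [Measure.restrict_apply (measurableSet_lt measurable_const hmeas)]
  refine measure_mono fun x ⟨hx, hrx⟩ => ⟨?_, hx⟩
  exact (ENNReal.ofReal_lt_ofReal_iff_of_nonneg (by positivity)).2 (by gcongr)

end Averages

section NormalPart

variable {V : Type*} [NormedAddCommGroup V] [InnerProductSpace ℝ V]

/-- The component of `w` normal to the line spanned by the unit vector `t`; it is linear in `w`. -/
def normalPart (t w : V) : V := w - ⟪t, w⟫ • t

lemma normalPart_sub (t w w' : V) : normalPart t (w - w') = normalPart t w - normalPart t w' := by
  simp only [normalPart, inner_sub_right, sub_smul]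
  abel

lemma norm_normalPart_sub_sq_le (t w w' : V) :
    ‖normalPart t (w - w')‖ ^ 2 ≤ 2 * (‖normalPart t w‖ ^ 2 + ‖normalPart t w'‖ ^ 2) := by
  rw [normalPart_sub]
  have hpar := parallelogram_law_with_norm ℝ (normalPart t w) (normalPart t w')
  nlinarith [mul_self_nonneg ‖normalPart t w + normalPart t w'‖]

lemma norm_normalPart_sq {t : V} (ht : ‖t‖ = 1) (w : V) :
    ‖normalPart t w‖ ^ 2 = ‖w‖ ^ 2 - ⟪t, w⟫ ^ 2 := by
  rw [normalPart, norm_sub_sq_real, real_inner_smul_right, norm_smul, ht, real_inner_comm,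
    Real.norm_eq_abs, mul_one, sq_abs]
  ring

/-- With `p = ⟪t, w⟫` this is `2 ‖w‖ (‖w‖ - p) ≤ 2 (‖w‖ - p) (‖w‖ + p)`. -/
lemma norm_smul_sub_sq_le {t w : V} (ht : ‖t‖ = 1) (hw : 0 ≤ ⟪t, w⟫) :
    ‖‖w‖ • t - w‖ ^ 2 ≤ 2 * ‖normalPart t w‖ ^ 2 := by
  have hle : ⟪t, w⟫ ≤ ‖w‖ := by simpa [ht] using real_inner_le_norm t w
  rw [norm_normalPart_sq ht, norm_sub_sq_real, real_inner_smul_left, norm_smul, ht, norm_norm]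
  nlinarith [mul_nonneg hw (sub_nonneg.2 hle)]

lemma norm_sub_inv_norm_smul_sq_le {t w : V} {m : ℝ} (ht : ‖t‖ = 1) (hm : 0 < m)
    (hw : m ≤ ⟪t, w⟫) :
    ‖t - ‖w‖⁻¹ • w‖ ^ 2 ≤ 2 / m ^ 2 * ‖normalPart t w‖ ^ 2 := by
  have hmw : m ≤ ‖w‖ := hw.trans (by simpa [ht] using real_inner_le_norm t w)
  have hw0 : 0 < ‖w‖ := hm.trans_le hmw
  have hscale : ‖‖w‖ • t - w‖ = ‖w‖ * ‖t - ‖w‖⁻¹ • w‖ := by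
    rw [← norm_norm w, ← norm_smul, norm_norm, smul_sub, smul_inv_smul₀ hw0.ne']
  rw [div_mul_eq_mul_div, le_div_iff₀ (by positivity)]
  calc ‖t - ‖w‖⁻¹ • w‖ ^ 2 * m ^ 2 ≤ ‖t - ‖w‖⁻¹ • w‖ ^ 2 * ‖w‖ ^ 2 := by gcongr
    _ = ‖‖w‖ • t - w‖ ^ 2 := by rw [hscale]; ring
    _ ≤ 2 * ‖normalPart t w‖ ^ 2 := norm_smul_sub_sq_le ht (hm.le.trans hw)

/-- The tangent-point energy density of a chord `w` issuing from a point with unit tangent `t`.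
It is `0` for `w = 0`, by the convention for division by zero. -/
def tangentPointDensity (s : ℝ) (t w : V) : ℝ≥0∞ :=
  ENNReal.ofReal (‖normalPart t w‖ ^ 2 / ‖w‖ ^ (2 * s + 1))

lemma ofReal_norm_normalPart_sq_le {s l : ℝ} {t w : V} (hs : 0 ≤ 2 * s + 1) (hw : ‖w‖ ≤ l) :
    ENNReal.ofReal (‖normalPart t w‖ ^ 2) ≤
      ENNReal.ofReal (l ^ (2 * s + 1)) * tangentPointDensity s t w := by
  rcases eq_or_ne w 0 with rfl | hw0
  · simp [normalPart]
  have hw_pow : ‖w‖ ^ (2 * s + 1) ≠ 0 := (Real.rpow_pos_of_pos (norm_pos_iff.2 hw0) _).ne'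
  rw [tangentPointDensity, ← ENNReal.ofReal_mul (Real.rpow_nonneg ((norm_nonneg w).trans hw) _)]
  refine ENNReal.ofReal_le_ofReal ?_
  calc ‖normalPart t w‖ ^ 2
      = ‖w‖ ^ (2 * s + 1) * (‖normalPart t w‖ ^ 2 / ‖w‖ ^ (2 * s + 1)) :=
        (mul_div_cancel₀ _ hw_pow).symm
    _ ≤ l ^ (2 * s + 1) * (‖normalPart t w‖ ^ 2 / ‖w‖ ^ (2 * s + 1)) := by gcongr

end NormalPart

/-- The constant of the Morrey inequality: four times the one for curves with nearly constant
tangent. -/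
def morreyConst (s : ℝ) : ℝ := 960 / (1 - (1 / 2) ^ (s - 3 / 2))

lemma morreyConst_pos {s : ℝ} (hs : 3 / 2 < s) : 0 < morreyConst s :=
  div_pos (by norm_num)
    (sub_pos.2 (Real.rpow_lt_one (by norm_num) (by norm_num) (sub_pos.2 hs)))

lemma exists_first_exit {g : ℝ → ℝ} {a b δ : ℝ} (hab : a < b) (hg : ContinuousOn g (Icc a b))
    (ha : g a < δ) :
    ∃ x, a < x ∧ x ≤ b ∧ (∀ u ∈ Icc a x, g u ≤ δ) ∧ (x = b ∨ g x = δ) := by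
  by_cases hstay : ∀ u ∈ Icc a b, g u ≤ δ
  · exact ⟨b, hab, le_rfl, hstay, .inl rfl⟩
  push Not at hstay
  obtain ⟨u, hu, hgu⟩ := hstay
  have hcompact : IsCompact (Icc a b ∩ g ⁻¹' {δ}) :=
    isCompact_Icc.of_isClosed_subset (hg.preimage_isClosed_of_isClosed isClosed_Icc
      isClosed_singleton) inter_subset_left
  obtain ⟨v, hv, hgv⟩ := intermediate_value_Icc hu.1 (hg.mono (Icc_subset_Icc_right hu.2))
    ⟨ha.le, hgu.le⟩
  obtain ⟨x, ⟨hx, hgx⟩, hmin⟩ := hcompact.exists_isLeast ⟨v, ⟨hv.1, hv.2.trans hu.2⟩, hgv⟩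
  refine ⟨x, hx.1.lt_of_ne ?_, hx.2, fun t ht => ?_, .inr hgx⟩
  · rintro rfl
    exact ha.ne hgx
  by_contra! hgt
  obtain ⟨z, hz, hgz⟩ := intermediate_value_Ico ht.1
    (hg.mono (Icc_subset_Icc_right (ht.2.trans hx.2))) ⟨ha.le, hgt⟩
  exact (hz.2.trans_le ht.2).not_ge (hmin ⟨⟨hz.1, hz.2.le.trans (ht.2.trans hx.2)⟩, hgz⟩)

section UnitSpeed

variable {V : Type*} [NormedAddCommGroup V] [InnerProductSpace ℝ V]

/-- `c` is a `C¹` curve parametrised by arc length, with unit tangent `T`. -/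
structure IsUnitSpeed (c T : ℝ → V) : Prop where
  hasDerivAt : ∀ u, HasDerivAt c (T u) u
  continuous_tangent : Continuous T
  norm_tangent : ∀ u, ‖T u‖ = 1

/-- The tangent-point energy of the arc of a unit speed curve over `(a, b]`. -/
def arcTangentPointEnergy (s : ℝ) (c T : ℝ → V) (a b : ℝ) : ℝ≥0∞ :=
  ∫⁻ u in Ioc a b, ∫⁻ v in Ioc a b, tangentPointDensity s (T u) (c v - c u)

lemma arcTangentPointEnergy_mono (s : ℝ) (c T : ℝ → V) {a b a' b' : ℝ} (ha : a ≤ a')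
    (hb : b' ≤ b) : arcTangentPointEnergy s c T a' b' ≤ arcTangentPointEnergy s c T a b :=
  have hsub : Ioc a' b' ⊆ Ioc a b := Ioc_subset_Ioc ha hb
  (lintegral_mono_set hsub).trans (lintegral_mono fun _ => lintegral_mono_set hsub)

namespace IsUnitSpeed

variable {c T : ℝ → V} {s a b e : ℝ}

lemma norm_chord_le (h : IsUnitSpeed c T) (u v : ℝ) : ‖c v - c u‖ ≤ |v - u| := by
  simpa using convex_univ.norm_image_sub_le_of_norm_hasDerivWithin_le (C := 1)
    (fun x _ => (h.hasDerivAt x).hasDerivWithinAt) (fun x _ => (h.norm_tangent x).le)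
    (mem_univ u) (mem_univ v)

lemma continuous_normalPart (h : IsUnitSpeed c T) :
    Continuous fun p : ℝ × ℝ => normalPart (T p.1) (c p.2 - c p.1) := by
  have hc : Continuous c := continuous_iff_continuousAt.2 fun u => (h.hasDerivAt u).continuousAt
  have hT := h.continuous_tangent
  unfold normalPart
  fun_prop

lemma lintegral_normalPart_le (h : IsUnitSpeed c T) (hs : 0 ≤ 2 * s + 1) :
    ∫⁻ u in Ioc a b, ∫⁻ v in Ioc a b, ENNReal.ofReal (‖normalPart (T u) (c v - c u)‖ ^ 2) ≤
      ENNReal.ofReal ((b - a) ^ (2 * s + 1)) * arcTangentPointEnergy s c T a b := by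
  simp only [arcTangentPointEnergy, ← lintegral_const_mul' _ _ ENNReal.ofReal_ne_top]
  refine setLIntegral_mono' measurableSet_Ioc fun u hu =>
    setLIntegral_mono' measurableSet_Ioc fun v hv => ofReal_norm_normalPart_sq_le hs ?_
  refine (h.norm_chord_le u v).trans (abs_sub_le_iff.2 ⟨?_, ?_⟩) <;>
    linarith [hu.1, hu.2, hv.1, hv.2]

lemma exists_mem_Ioc_setLIntegral_normalPart_le (h : IsUnitSpeed c T) (hs : 0 ≤ 2 * s + 1)
    (hE : arcTangentPointEnergy s c T a b ≤ ENNReal.ofReal e) {a' b' : ℝ} (ha : a ≤ a')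
    (hab' : a' < b') (hb : b' ≤ b) :
    ∃ v ∈ Ioc a' b', ∫⁻ u in Ioc a b, ENNReal.ofReal (‖normalPart (T u) (c v - c u)‖ ^ 2) ≤
      ENNReal.ofReal ((b - a) ^ (2 * s + 1) * e / (b' - a')) := by
  have hmeas : Measurable fun p : ℝ × ℝ =>
      ENNReal.ofReal (‖normalPart (T p.1) (c p.2 - c p.1)‖ ^ 2) :=
    (h.continuous_normalPart.norm.pow 2).measurable.ennreal_ofReal
  refine exists_mem_Ioc_le_of_setLIntegral_le hab' hmeas.lintegral_prod_left'.aemeasurable ?_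
  calc ∫⁻ v in Ioc a' b', ∫⁻ u in Ioc a b, ENNReal.ofReal (‖normalPart (T u) (c v - c u)‖ ^ 2)
      ≤ ∫⁻ v in Ioc a b, ∫⁻ u in Ioc a b, ENNReal.ofReal (‖normalPart (T u) (c v - c u)‖ ^ 2) :=
        lintegral_mono_set (Ioc_subset_Ioc ha hb)
    _ = ∫⁻ u in Ioc a b, ∫⁻ v in Ioc a b, ENNReal.ofReal (‖normalPart (T u) (c v - c u)‖ ^ 2) :=
        (lintegral_lintegral_swap hmeas.aemeasurable).symm
    _ ≤ ENNReal.ofReal ((b - a) ^ (2 * s + 1)) * ENNReal.ofReal e :=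
        (h.lintegral_normalPart_le hs).trans (by gcongr)
    _ = ENNReal.ofReal ((b - a) ^ (2 * s + 1) * e) :=
        (ENNReal.ofReal_mul (Real.rpow_nonneg (by linarith) _)).symm

lemma half_sub_le_inner_chord (h : IsUnitSpeed c T)
    (hT : ∀ u ∈ Icc a b, ∀ v ∈ Icc a b, 1 / 2 ≤ ⟪T u, T v⟫) {u v v' : ℝ} (hu : u ∈ Icc a b)
    (hv : a ≤ v) (hvv' : v ≤ v') (hv' : v' ≤ b) : (v' - v) / 2 ≤ ⟪T u, c v' - c v⟫ := by
  have hderiv x : HasDerivAt (fun x => ⟪T u, c x⟫) ⟪T u, T x⟫ x := by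
    simpa using (hasDerivAt_const x (T u)).inner ℝ (h.hasDerivAt x)
  have hmean := (convex_Icc a b).mul_sub_le_image_sub_of_le_deriv (C := 1 / 2)
    (fun x _ => (hderiv x).continuousAt.continuousWithinAt)
    (fun x _ => (hderiv x).differentiableAt.differentiableWithinAt)
    (fun x hx => (hderiv x).deriv ▸ hT u hu x (interior_subset hx))
    v ⟨hv, hvv'.trans hv'⟩ v' ⟨hv.trans hvv', hv'⟩ hvv'
  rw [inner_sub_right]
  linarith

/-- The chord joins well chosen points of the first and of the last third of the arc. -/
lemma exists_chord (h : IsUnitSpeed c T) (hs : 0 ≤ 2 * s + 1) (hab : a < b) (he : 0 ≤ e)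
    (hT : ∀ u ∈ Icc a b, ∀ v ∈ Icc a b, 1 / 2 ≤ ⟪T u, T v⟫)
    (hE : arcTangentPointEnergy s c T a b ≤ ENNReal.ofReal e) :
    ∃ w, (∀ u ∈ Icc a b, (b - a) / 6 ≤ ⟪T u, w⟫) ∧
      ∫⁻ u in Ioc a b, ENNReal.ofReal (‖normalPart (T u) w‖ ^ 2) ≤
        ENNReal.ofReal (12 * e * (b - a) ^ (2 * s)) := by
  have hl : 0 < b - a := sub_pos.2 hab
  obtain ⟨v, hv, hvE⟩ := h.exists_mem_Ioc_setLIntegral_normalPart_le hs hE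
    le_rfl (b' := a + (b - a) / 3) (by linarith) (by linarith)
  obtain ⟨v', hv', hv'E⟩ := h.exists_mem_Ioc_setLIntegral_normalPart_le hs hE
    (a' := b - (b - a) / 3) (by linarith) (by linarith) le_rfl
  have hpow : (b - a) ^ (2 * s + 1) * e / ((b - a) / 3) = 3 * e * (b - a) ^ (2 * s) := by
    rw [Real.rpow_add_one hl.ne']
    field_simp
  rw [add_sub_cancel_left, hpow] at hvE
  rw [sub_sub_cancel, hpow] at hv'E
  refine ⟨c v' - c v, fun u hu => ?_, ?_⟩
  · have hinner := h.half_sub_le_inner_chord hT hu hv.1.le (v' := v')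
      (by linarith [hv.2, hv'.1]) hv'.2
    linarith [hv.2, hv'.1]
  have hsplit u : ENNReal.ofReal (‖normalPart (T u) (c v' - c v)‖ ^ 2) ≤
      2 * (ENNReal.ofReal (‖normalPart (T u) (c v' - c u)‖ ^ 2) +
        ENNReal.ofReal (‖normalPart (T u) (c v - c u)‖ ^ 2)) := by
    rw [← ENNReal.ofReal_add (by positivity) (by positivity), ← ENNReal.ofReal_ofNat 2,
      ← ENNReal.ofReal_mul zero_le_two, ← sub_sub_sub_cancel_right (c v') (c v) (c u)]
    exact ENNReal.ofReal_le_ofReal (norm_normalPart_sub_sq_le _ _ _)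
  have hmeas : Measurable fun u => ENNReal.ofReal (‖normalPart (T u) (c v' - c u)‖ ^ 2) :=
    ((h.continuous_normalPart.comp (.prodMk_left v')).norm.pow 2).measurable.ennreal_ofReal
  refine (lintegral_mono hsplit).trans ?_
  rw [lintegral_const_mul' _ _ ENNReal.ofNat_ne_top, lintegral_add_left hmeas]
  refine (mul_le_mul_right (add_le_add hv'E hvE) 2).trans_eq ?_
  rw [← ENNReal.ofReal_add (by positivity) (by positivity), ← ENNReal.ofReal_ofNat 2,
    ← ENNReal.ofReal_mul zero_le_two]
  ring_nf

lemma exists_isNearlyConstOn_tangent (h : IsUnitSpeed c T) (hs : 0 ≤ 2 * s + 1) (hab : a < b)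
    (he : 0 ≤ e) (hT : ∀ u ∈ Icc a b, ∀ v ∈ Icc a b, 1 / 2 ≤ ⟪T u, T v⟫)
    (hE : arcTangentPointEnergy s c T a b ≤ ENNReal.ofReal e) :
    ∃ y, IsNearlyConstOn T y (60 * √e * (b - a) ^ (s - 3 / 2)) a b := by
  have hl : 0 < b - a := sub_pos.2 hab
  obtain ⟨w, hinner, hint⟩ := h.exists_chord hs hab he hT hE
  have hradius : (60 * √e * (b - a) ^ (s - 3 / 2)) ^ 2 * (b - a) ^ 3 =
      3600 * (e * (b - a) ^ (2 * s)) := by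
    have hpow : ((b - a) ^ (s - 3 / 2)) ^ 2 * (b - a) ^ 3 = (b - a) ^ (2 * s) := by
      rw [← Real.rpow_mul_natCast hl.le, ← Real.rpow_add_natCast hl.ne']
      congr 1
      push_cast
      ring
    rw [mul_pow, mul_pow, Real.sq_sqrt he, mul_assoc, hpow]
    ring
  refine ⟨‖w‖⁻¹ • w, isNearlyConstOn_of_setLIntegral_sq_le h.continuous_tangent (by positivity) ?_⟩
  calc ∫⁻ u in Ioc a b, ENNReal.ofReal (dist (T u) (‖w‖⁻¹ • w) ^ 2)
      ≤ ∫⁻ u in Ioc a b, ENNReal.ofReal (2 / ((b - a) / 6) ^ 2) *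
          ENNReal.ofReal (‖normalPart (T u) w‖ ^ 2) := by
        refine setLIntegral_mono' measurableSet_Ioc fun u hu => ?_
        rw [← ENNReal.ofReal_mul (by positivity), dist_eq_norm]
        exact ENNReal.ofReal_le_ofReal (norm_sub_inv_norm_smul_sq_le (h.norm_tangent u)
          (by positivity) (hinner u (Ioc_subset_Icc_self hu)))
    _ ≤ ENNReal.ofReal (2 / ((b - a) / 6) ^ 2) * ENNReal.ofReal (12 * e * (b - a) ^ (2 * s)) := by
        rw [lintegral_const_mul' _ _ ENNReal.ofReal_ne_top]
        gcongr
    _ ≤ _ := by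
        rw [← ENNReal.ofReal_mul (by positivity), ← ENNReal.ofReal_mul (by positivity)]
        refine ENNReal.ofReal_le_ofReal ?_
        rw [div_mul_eq_mul_div, div_le_iff₀ (by positivity)]
        have : 0 ≤ e * (b - a) ^ (2 * s) := by positivity
        nlinarith [hradius]

lemma norm_tangent_sub_le_of_forall_norm_le_half (h : IsUnitSpeed c T) (hs : 3 / 2 < s)
    (hab : a < b) (he : 0 ≤ e) (hT : ∀ u ∈ Icc a b, ‖T u - T a‖ ≤ 1 / 2)
    (hE : arcTangentPointEnergy s c T a b ≤ ENNReal.ofReal e) :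
    ‖T b - T a‖ ≤ 240 / (1 - (1 / 2) ^ (s - 3 / 2)) * √e * (b - a) ^ (s - 3 / 2) := by
  have hinner u (hu : u ∈ Icc a b) v (hv : v ∈ Icc a b) : 1 / 2 ≤ ⟪T u, T v⟫ := by
    have hclose : ‖T u - T v‖ ≤ 1 := by
      linarith [norm_sub_le_norm_sub_add_norm_sub (T u) (T a) (T v), hT u hu,
        norm_sub_rev (T a) (T v), hT v hv]
    have hexpand := norm_sub_sq_real (T u) (T v)
    rw [h.norm_tangent, h.norm_tangent] at hexpand
    nlinarith [norm_nonneg (T u - T v)]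
  rw [← dist_eq_norm, dist_comm]
  refine (dist_le_of_forall_isNearlyConstOn (K := 60 * √e) (sub_pos.2 hs) (by positivity) hab
    h.continuous_tangent.continuousOn fun a' b' ha hab' hb => ?_).trans_eq (by ring)
  have hsub : Icc a' b' ⊆ Icc a b := Icc_subset_Icc ha hb
  exact h.exists_isNearlyConstOn_tangent (by linarith) hab' he
    (fun u hu v hv => hinner u (hsub hu) v (hsub hv))
    ((arcTangentPointEnergy_mono s c T ha hb).trans hE)

/-- Either the tangent stays within `1 / 2` of its initial value, or it does so up to its first exit
at `x`; in the latter case the bound at `x` is at least `1 / 2`, a quarter of the trivial bound for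
`‖T b - T a‖`. -/
lemma norm_tangent_sub_le (h : IsUnitSpeed c T) (hs : 3 / 2 < s) (hab : a < b) (he : 0 ≤ e)
    (hE : arcTangentPointEnergy s c T a b ≤ ENNReal.ofReal e) :
    ‖T b - T a‖ ≤ morreyConst s * √e * (b - a) ^ (s - 3 / 2) := by
  have hcont : Continuous fun u => ‖T u - T a‖ := (h.continuous_tangent.sub continuous_const).norm
  obtain ⟨x, hax, hxb, hstay, hexit⟩ :=
    exists_first_exit hab hcont.continuousOn (δ := 1 / 2) (by simp)
  have hlocal := h.norm_tangent_sub_le_of_forall_norm_le_half hs hax he hstay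
    ((arcTangentPointEnergy_mono s c T le_rfl hxb).trans hE)
  have hbound : 4 * ‖T x - T a‖ ≤ morreyConst s * √e * (b - a) ^ (s - 3 / 2) := calc
    4 * ‖T x - T a‖ ≤ morreyConst s * √e * (x - a) ^ (s - 3 / 2) := by
      rw [morreyConst]
      linear_combination 4 * hlocal
    _ ≤ _ := by
      have := morreyConst_pos hs
      gcongr
  rcases hexit with rfl | hx
  · linarith [norm_nonneg (T x - T a)]
  · have htriv := norm_sub_le (T b) (T a)
    rw [h.norm_tangent, h.norm_tangent] at htriv
    linarith

end IsUnitSpeed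

end UnitSpeed

section Reparametrisation

lemma periodic_deriv {E : Type*} [NormedAddCommGroup E] [NormedSpace ℝ E] {f : ℝ → E} {p : ℝ}
    (hf : Function.Periodic f p) : Function.Periodic (deriv f) p := fun x => by
  rw [← deriv_comp_add_const, hf.funext]

lemma setLIntegral_I01_eq_setLIntegral_Ioc {f : ℝ → ℝ≥0∞} (hf : Function.Periodic f 1) (a : ℝ) :
    ∫⁻ x in I01, f x = ∫⁻ x in Ioc a (a + 1), f x := by
  rw [I01, setLIntegral_congr Ico_ae_eq_Ioc]
  simpa using (isAddFundamentalDomain_Ioc one_pos 0).setLIntegral_eq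
    (isAddFundamentalDomain_Ioc one_pos a) f hf.map_vadd_zmultiples

lemma exists_pos_forall_le_of_periodic {g : ℝ → ℝ} {p : ℝ} (hp : 0 < p)
    (hgp : Function.Periodic g p) (hg : Continuous g) (hpos : ∀ x, 0 < g x) :
    ∃ m, 0 < m ∧ ∀ x, m ≤ g x := by
  obtain ⟨x₀, -, hmin⟩ := isCompact_Icc.exists_isMinOn (nonempty_Icc.2 hp.le) hg.continuousOn
  refine ⟨g x₀, hpos x₀, fun x => ?_⟩
  obtain ⟨y, hy, hxy⟩ := hgp.exists_mem_Ico₀ hp x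
  exact hxy ▸ hmin (Ico_subset_Icc_self hy)

lemma exists_orderIso_hasDerivAt {g : ℝ → ℝ} {m : ℝ} (hg : Continuous g) (hm : 0 < m)
    (hle : ∀ x, m ≤ g x) : ∃ Φ : ℝ ≃o ℝ, ∀ x, HasDerivAt Φ (g x) x := by
  set F : ℝ → ℝ := fun x => ∫ t in (0 : ℝ)..x, g t
  have hderiv x : HasDerivAt F (g x) x := intervalIntegral.integral_hasDerivAt_right
    (hg.intervalIntegrable _ _) (hg.stronglyMeasurableAtFilter _ _) hg.continuousAt
  have hmono : StrictMono F := strictMono_of_hasDerivAt_pos hderiv fun x => hm.trans_le (hle x)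
  have hcont : Continuous F := continuous_iff_continuousAt.2 fun x => (hderiv x).continuousAt
  have hgrowth {x y : ℝ} (hxy : x ≤ y) : m * (y - x) ≤ F y - F x :=
    mul_sub_le_image_sub_of_le_deriv (fun x => (hderiv x).differentiableAt)
      (fun x => (hderiv x).deriv ▸ hle x) hxy
  have hF0 : F 0 = 0 := intervalIntegral.integral_same
  have htop : Tendsto F atTop atTop := by
    refine tendsto_atTop_mono' atTop ?_ (tendsto_id.const_mul_atTop hm)
    filter_upwards [eventually_ge_atTop 0] with x hx
    simpa [hF0] using hgrowth hx
  have hbot : Tendsto F atBot atBot := by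
    refine tendsto_atBot_mono' atBot ?_ (tendsto_id.const_mul_atBot hm)
    filter_upwards [eventually_le_atBot 0] with x hx
    simpa [hF0] using hgrowth hx
  exact ⟨hmono.orderIsoOfSurjective F (hcont.surjective htop hbot), hderiv⟩

lemma setLIntegral_Ioc_orderIso {Φ : ℝ ≃o ℝ} {Φ' : ℝ → ℝ} (hΦ : ∀ x, HasDerivAt Φ (Φ' x) x)
    (a b : ℝ) (f : ℝ → ℝ≥0∞) :
    ∫⁻ u in Ioc (Φ a) (Φ b), f u = ∫⁻ x in Ioc a b, ENNReal.ofReal (Φ' x) * f (Φ x) := by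
  rw [← Φ.image_Ioc]
  exact lintegral_image_eq_lintegral_deriv_mul_of_monotoneOn measurableSet_Ioc
    (fun x _ => (hΦ x).hasDerivWithinAt) (Φ.monotone.monotoneOn _) f

/-- The two candidates are the translates of `y` on either side of `x`. -/
lemma exists_int_forall_abs_sub_le_of_monotone {F : ℝ → ℝ} (hF : Monotone F) (x y : ℝ) :
    ∃ k : ℤ, |y + k - x| ≤ 1 ∧ ∀ m : ℤ, |F (y + k) - F x| ≤ |F (y + m) - F x| := by
  set j : ℤ := ⌈x - y⌉
  have hj : x ≤ y + j := sub_le_iff_le_add'.1 (Int.le_ceil _)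
  have hj' : y + (j - 1 : ℤ) < x := by
    push_cast
    linarith [Int.ceil_lt_add_one (x - y)]
  have hright m (hm : j ≤ m) : |F (y + j) - F x| ≤ |F (y + m) - F x| :=
    abs_le_abs_of_nonneg (sub_nonneg.2 (hF hj)) (sub_le_sub_right (hF (by gcongr)) _)
  have hleft m (hm : m ≤ j - 1) : |F (y + (j - 1 : ℤ)) - F x| ≤ |F (y + m) - F x| :=
    abs_le_abs_of_nonpos (sub_nonpos.2 (hF hj'.le)) (sub_le_sub_right (hF (by gcongr)) _)
  have hcases (m : ℤ) : j ≤ m ∨ m ≤ j - 1 := by lia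
  push_cast at hj'
  rcases le_total |F (y + j) - F x| |F (y + (j - 1 : ℤ)) - F x| with hle | hle
  · refine ⟨j, abs_le.2 ⟨by linarith, by linarith⟩, fun m => ?_⟩
    exact (hcases m).elim (hright m) fun hm => hle.trans (hleft m hm)
  · refine ⟨j - 1, abs_le.2 ⟨?_, ?_⟩, fun m => ?_⟩
    · push_cast; linarith
    · push_cast; linarith
    · exact (hcases m).elim (fun hm => hle.trans (hright m hm)) (hleft m)

end Reparametrisation

section ClosedCurve

variable {n : ℕ} {γ : ℝ → En n} {s : ℝ} {Φ : ℝ ≃o ℝ}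

lemma norm_Dg_self {x : ℝ} (hx : deriv γ x ≠ 0) : ‖Dg γ γ x‖ = 1 := by
  rw [Dg, norm_smul, norm_inv, norm_norm, inv_mul_cancel₀ (norm_ne_zero_iff.2 hx)]

lemma sub_DDg_self (γ : ℝ → En n) (x : ℝ) (w : En n) :
    w - DDg γ γ x w = normalPart (Dg γ γ x) w := by
  simp only [DDg, normalPart, Dg, real_inner_smul_left, smul_smul]
  ring_nf

lemma ofReal_norm_Rop_sq_mul_muW (s : ℝ) (γ : ℝ → En n) (x y : ℝ) :
    ENNReal.ofReal (‖Rop s γ γ x y‖ ^ 2 * muW γ x y) = ENNReal.ofReal ‖deriv γ x‖ *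
      (ENNReal.ofReal ‖deriv γ y‖ * tangentPointDensity s (Dg γ γ x) (γ y - γ x)) := by
  rw [tangentPointDensity, ← ENNReal.ofReal_mul (norm_nonneg _),
    ← ENNReal.ofReal_mul (norm_nonneg _), Rop, sub_DDg_self, muW, norm_smul, norm_inv,
    Real.norm_of_nonneg (by positivity)]
  congr 1
  rcases eq_or_ne (γ y - γ x) 0 with hw | hw
  · simp [hw, normalPart]
  have hw' : 0 < ‖γ y - γ x‖ := norm_pos_iff.2 hw
  rw [Real.rpow_add_one hw'.ne', mul_comm 2 s, Real.rpow_mul hw'.le, Real.rpow_two]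
  field_simp

lemma EtpE_eq_setLIntegral_Ioc (hγp : Function.Periodic γ 1) (s a : ℝ) :
    EtpE s γ = ∫⁻ x in Ioc a (a + 1), ∫⁻ y in Ioc a (a + 1),
      ENNReal.ofReal (‖Rop s γ γ x y‖ ^ 2 * muW γ x y) := by
  have hdp := periodic_deriv hγp
  rw [EtpE, setLIntegral_I01_eq_setLIntegral_Ioc (a := a) fun x => by
    simp only [Rop, muW, DDg, hγp x, hdp x]]
  exact lintegral_congr fun x => setLIntegral_I01_eq_setLIntegral_Ioc (a := a) fun y => by
    simp only [Rop, muW, DDg, hγp y, hdp y]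

lemma isUnitSpeed_comp_symm (hγ : ContDiff ℝ 1 γ) (h0 : ∀ x, deriv γ x ≠ 0)
    (hΦ : ∀ x, HasDerivAt Φ ‖deriv γ x‖ x) :
    IsUnitSpeed (γ ∘ Φ.symm) (Dg γ γ ∘ Φ.symm) where
  hasDerivAt u := (hγ.differentiable one_ne_zero _).hasDerivAt.scomp u
    (HasDerivAt.of_local_left_inverse Φ.symm.continuous.continuousAt (hΦ _)
      (norm_ne_zero_iff.2 (h0 _)) (.of_forall Φ.apply_symm_apply))
  continuous_tangent := by
    have hderiv : Continuous (deriv γ) := hγ.continuous_deriv le_rfl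
    exact ((hderiv.norm.inv₀ fun x => norm_ne_zero_iff.2 (h0 x)).smul hderiv).comp
      Φ.symm.continuous
  norm_tangent _ := norm_Dg_self (h0 _)

lemma arcTangentPointEnergy_comp_symm (hΦ : ∀ x, HasDerivAt Φ ‖deriv γ x‖ x) (s a b : ℝ) :
    arcTangentPointEnergy s (γ ∘ Φ.symm) (Dg γ γ ∘ Φ.symm) (Φ a) (Φ b) =
      ∫⁻ x in Ioc a b, ∫⁻ y in Ioc a b, ENNReal.ofReal (‖Rop s γ γ x y‖ ^ 2 * muW γ x y) := by
  simp only [arcTangentPointEnergy, setLIntegral_Ioc_orderIso hΦ, Function.comp_apply,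
    OrderIso.symm_apply_apply, ofReal_norm_Rop_sq_mul_muW,
    lintegral_const_mul' _ _ ENNReal.ofReal_ne_top]

lemma exists_orderIso_hasDerivAt_norm_deriv (hγp : Function.Periodic γ 1) (hγ : ContDiff ℝ 1 γ)
    (h0 : ∀ x, deriv γ x ≠ 0) : ∃ Φ : ℝ ≃o ℝ, ∀ x, HasDerivAt Φ ‖deriv γ x‖ x := by
  have hspeed : Continuous fun x => ‖deriv γ x‖ := (hγ.continuous_deriv le_rfl).norm
  obtain ⟨m, hm, hle⟩ := exists_pos_forall_le_of_periodic (g := fun x => ‖deriv γ x‖)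
    one_pos (fun x => congrArg norm (periodic_deriv hγp x)) hspeed fun x => norm_pos_iff.2 (h0 x)
  exact exists_orderIso_hasDerivAt hspeed hm hle

lemma norm_Dg_self_sub_le (hs : 3 / 2 < s) (hγp : Function.Periodic γ 1) (hγ : ContDiff ℝ 1 γ)
    (h0 : ∀ x, deriv γ x ≠ 0) (hΦ : ∀ x, HasDerivAt Φ ‖deriv γ x‖ x) {a b : ℝ} (hab : a ≤ b)
    (hba : b ≤ a + 1) :
    ENNReal.ofReal ‖Dg γ γ b - Dg γ γ a‖ ≤ ENNReal.ofReal (morreyConst s) *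
      EtpE s γ ^ ((1 : ℝ) / 2) * ENNReal.ofReal ((Φ b - Φ a) ^ (s - 3 / 2)) := by
  rcases hab.eq_or_lt with rfl | hab
  · simp
  have hΦab : Φ a < Φ b := Φ.strictMono hab
  have hC := morreyConst_pos hs
  rcases eq_or_ne (EtpE s γ) ⊤ with htop | hfin
  · rw [htop, ENNReal.top_rpow_of_pos (by norm_num), ENNReal.mul_top (by simpa using hC),
      ENNReal.top_mul (by simpa using Real.rpow_pos_of_pos (sub_pos.2 hΦab) _)]
    exact le_top
  have hE : arcTangentPointEnergy s (γ ∘ Φ.symm) (Dg γ γ ∘ Φ.symm) (Φ a) (Φ b) ≤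
      ENNReal.ofReal (EtpE s γ).toReal := by
    rw [ENNReal.ofReal_toReal hfin, EtpE_eq_setLIntegral_Ioc hγp s a,
      ← arcTangentPointEnergy_comp_symm hΦ]
    exact arcTangentPointEnergy_mono _ _ _ le_rfl (Φ.monotone hba)
  have hmorrey := (isUnitSpeed_comp_symm hγ h0 hΦ).norm_tangent_sub_le hs hΦab
    ENNReal.toReal_nonneg hE
  simp only [Function.comp_apply, OrderIso.symm_apply_apply] at hmorrey
  refine (ENNReal.ofReal_le_ofReal hmorrey).trans_eq ?_
  rw [ENNReal.ofReal_mul (by positivity), ENNReal.ofReal_mul hC.le, Real.sqrt_eq_rpow,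
    ← ENNReal.ofReal_rpow_of_nonneg ENNReal.toReal_nonneg (by norm_num), ENNReal.ofReal_toReal hfin]

lemma exists_int_abs_sub_le_arcDist (hγ : ContDiff ℝ 1 γ)
    (hΦ : ∀ x, HasDerivAt Φ ‖deriv γ x‖ x) (x y : ℝ) :
    ∃ k : ℤ, |y + k - x| ≤ 1 ∧ |Φ (y + k) - Φ x| ≤ arcDist γ x y := by
  obtain ⟨k, hk, hmin⟩ := exists_int_forall_abs_sub_le_of_monotone Φ.monotone x y
  refine ⟨k, hk, le_ciInf fun m => ?_⟩
  rw [intervalIntegral.integral_eq_sub_of_hasDerivAt (fun t _ => hΦ t)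
    ((hγ.continuous_deriv le_rfl).norm.intervalIntegrable _ _)]
  exact hmin m

theorem statement1_general {s : ℝ} (hs : 3 / 2 < s) :
    ∃ C : ℝ, 0 ≤ C ∧ ∀ (n : ℕ) (γ : ℝ → En n),
      Function.Periodic γ 1 → ContDiff ℝ 1 γ → (∀ x, deriv γ x ≠ 0) →
      ∀ x y : ℝ,
        ENNReal.ofReal ‖Dg γ γ y - Dg γ γ x‖ ≤
          ENNReal.ofReal C * EtpE s γ ^ ((1 : ℝ) / 2) *
            ENNReal.ofReal (arcDist γ x y ^ (s - 3 / 2)) := by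
  refine ⟨morreyConst s, (morreyConst_pos hs).le, fun n γ hγp hγ h0 x y => ?_⟩
  obtain ⟨Φ, hΦ⟩ := exists_orderIso_hasDerivAt_norm_deriv hγp hγ h0
  obtain ⟨k, hk, hkdist⟩ := exists_int_abs_sub_le_arcDist hγ hΦ x y
  obtain ⟨hk_left, hk_right⟩ := abs_le.1 hk
  have hperiod : Dg γ γ (y + k) = Dg γ γ y := by
    have hderiv : deriv γ (y + k) = deriv γ y := by simpa using (periodic_deriv hγp).int_mul k y
    simp only [Dg, hderiv]
  suffices hlift : ENNReal.ofReal ‖Dg γ γ (y + k) - Dg γ γ x‖ ≤ ENNReal.ofReal (morreyConst s) *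
      EtpE s γ ^ ((1 : ℝ) / 2) * ENNReal.ofReal (|Φ (y + k) - Φ x| ^ (s - 3 / 2)) by
    rw [← hperiod]
    exact hlift.trans (by gcongr)
  rcases le_total x (y + k) with hxy | hxy
  · rw [abs_of_nonneg (sub_nonneg.2 (Φ.monotone hxy))]
    exact norm_Dg_self_sub_le hs hγp hγ h0 hΦ hxy (by linarith)
  · rw [norm_sub_rev, abs_sub_comm, abs_of_nonneg (sub_nonneg.2 (Φ.monotone hxy))]
    exact norm_Dg_self_sub_le hs hγp hγ h0 hΦ hxy (by linarith)

end ClosedCurve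

/-- geometric Morrey inequality: for `s ∈ (3/2,2)` and `α = s - 3/2`
there is `C ≥ 0`, depending only on `s`, such that every injective `C¹` immersion
`γ : 𝕋 → ℝⁿ` satisfies `|D_γγ(y) − D_γγ(x)| ≤ C·√(E(γ))·d_γ(x,y)^α` for all `x, y`. -/
theorem statement1 (s : ℝ) (hs : s ∈ Set.Ioo (3 / 2 : ℝ) 2) :
    ∃ C : ℝ, 0 ≤ C ∧ ∀ (n : ℕ), 2 ≤ n → ∀ γ : ℝ → En n,
      Function.Periodic γ 1 → ContDiff ℝ 1 γ → Set.InjOn γ I01 → (∀ x, deriv γ x ≠ 0) →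
      ∀ x y : ℝ,
        ENNReal.ofReal ‖Dg γ γ y - Dg γ γ x‖ ≤
          ENNReal.ofReal C * EtpE s γ ^ ((1 : ℝ) / 2) *
            ENNReal.ofReal (arcDist γ x y ^ (s - 3 / 2)) := by
  obtain ⟨C, hC, hmorrey⟩ := statement1_general hs.1
  exact ⟨C, hC, fun n _ γ hγp hγ _ h0 => hmorrey n γ hγp hγ h0⟩
end
end

section
/- Let s ∈ (3/2, 2), α = s − 3/2 and β = (α + 1)/(2α²). There is a constant 0 < C < ∞, depending only on s, such that every injective C¹ immersion γ : 𝕋 → ℝⁿ satisfies distor(γ) = sup_{x≠y} d_γ(x,y)/|γ(y)−γ(x)| ≤ C · L(γ)^{(α+1)/α} · E(γ)^β. -/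
open MeasureTheory Real Filter Set
open scoped ENNReal Topology RealInnerProductSpace

noncomputable section

/-
The normal deviation `‖P(γ y - γ x)‖`, with `P` the projection off the tangent at `x`, averaged over
`x` and `y` in two parameter windows of size `h`, measures how far the tangents there are from the
mean increment between the windows. A good point of each window thus has a tangent close to this
common direction, and summing over dyadic windows gives a Morrey-type estimate: with
`α = s - 3/2`, tangents at arc-length distance `r` differ by at most a constant times
`E ^ (1/2) * r ^ α`. Hence every arc shorter than `r ~ E ^ (-1/(2α))` is almost straight. If two
points far apart along the curve were much closer in space than `r`, a closest such pair would have
a chord perpendicular to both strands, which would then cost more energy than `E`. So the distortion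
is at most a constant times `L / r ~ L * E ^ (1/(2α))`. This quantity is invariant under scaling and
at least `1`, so raising it to the power `(α + 1)/α ≥ 1` only enlarges it.
-/

section UnitVectors

variable {V : Type*} [NormedAddCommGroup V] [InnerProductSpace ℝ V] {u v w : V} {m : ℝ}

lemma starProjection_orthogonal_span_singleton (hu : ‖u‖ = 1) (w : V) :
    (ℝ ∙ u)ᗮ.starProjection w = w - ⟪u, w⟫ • u := by
  rw [Submodule.starProjection_orthogonal_val, Submodule.starProjection_unit_singleton ℝ hu]

lemma inner_eq_one_sub_half_norm_sub_sq (hu : ‖u‖ = 1) (hv : ‖v‖ = 1) :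
    ⟪u, v⟫ = 1 - ‖u - v‖ ^ 2 / 2 := by
  linarith [norm_sub_sq_real u v, show ‖u‖ ^ 2 = 1 by simp [hu], show ‖v‖ ^ 2 = 1 by simp [hv]]

lemma half_le_inner_of_norm_sub_le_one (hu : ‖u‖ = 1) (hv : ‖v‖ = 1) (huv : ‖u - v‖ ≤ 1) :
    1 / 2 ≤ ⟪u, v⟫ := by
  have hsq : ‖u - v‖ ^ 2 ≤ 1 := pow_le_one₀ (norm_nonneg _) huv
  linarith [inner_eq_one_sub_half_norm_sub_sq hu hv]

lemma mul_norm_sub_le_norm_smul_sub_smul (hu : ‖u‖ = 1) (hv : ‖v‖ = 1) {c d : ℝ} (hm : 0 ≤ m)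
    (hc : m ≤ c) (hd : m ≤ d) : m * ‖u - v‖ ≤ ‖c • u - d • v‖ := by
  have hcd : m ^ 2 ≤ c * d := by nlinarith
  have hexpand : ‖c • u - d • v‖ ^ 2 = (c - d) ^ 2 + c * d * ‖u - v‖ ^ 2 := by
    rw [norm_sub_sq_real, norm_smul, norm_smul, hu, hv, real_inner_smul_left,
      real_inner_smul_right, inner_eq_one_sub_half_norm_sub_sq hu hv, mul_one, mul_one,
      norm_eq_abs, norm_eq_abs, sq_abs, sq_abs]
    ring
  refine le_of_sq_le_sq ?_ (norm_nonneg _)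
  calc (m * ‖u - v‖) ^ 2 = m ^ 2 * ‖u - v‖ ^ 2 := mul_pow _ _ _
    _ ≤ c * d * ‖u - v‖ ^ 2 := by gcongr
    _ ≤ ‖c • u - d • v‖ ^ 2 := by rw [hexpand]; linarith [sq_nonneg (c - d)]

lemma mul_norm_sub_le_norm_starProjection_add (hu : ‖u‖ = 1) (hv : ‖v‖ = 1) (hm : 0 ≤ m)
    (huw : m ≤ ⟪u, w⟫) (hvw : m ≤ ⟪v, w⟫) :
    m * ‖u - v‖ ≤ ‖(ℝ ∙ u)ᗮ.starProjection w‖ + ‖(ℝ ∙ v)ᗮ.starProjection w‖ := by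
  have hdiff : ⟪u, w⟫ • u - ⟪v, w⟫ • v
      = (ℝ ∙ v)ᗮ.starProjection w - (ℝ ∙ u)ᗮ.starProjection w := by
    rw [starProjection_orthogonal_span_singleton hu, starProjection_orthogonal_span_singleton hv]
    abel
  calc m * ‖u - v‖ ≤ ‖⟪u, w⟫ • u - ⟪v, w⟫ • v‖ :=
        mul_norm_sub_le_norm_smul_sub_smul hu hv hm huw hvw
    _ ≤ ‖(ℝ ∙ v)ᗮ.starProjection w‖ + ‖(ℝ ∙ u)ᗮ.starProjection w‖ := hdiff ▸ norm_sub_le _ _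
    _ = _ := add_comm _ _

lemma norm_sub_abs_inner_le_norm_starProjection (hu : ‖u‖ = 1) (w : V) :
    ‖w‖ - |⟪u, w⟫| ≤ ‖(ℝ ∙ u)ᗮ.starProjection w‖ := by
  have hproj := norm_sub_norm_le w (⟪u, w⟫ • u)
  rwa [norm_smul, hu, mul_one, norm_eq_abs,
    ← starProjection_orthogonal_span_singleton hu] at hproj

end UnitVectors

/-- A continuously differentiable curve in arc-length parametrization. -/
structure IsUnitSpeed_s2 {V : Type*} [NormedAddCommGroup V] [InnerProductSpace ℝ V]
    (η : ℝ → V) : Prop where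
  contDiff : ContDiff ℝ 1 η
  norm_deriv (t : ℝ) : ‖deriv η t‖ = 1

/-- The oscillation of the derivative of `η` over `S` is at most `c`: any two tangent vectors at
points of `S` are within distance `c` of each other. -/
def TangentOscLE {V : Type*} [NormedAddCommGroup V] [NormedSpace ℝ V]
    (η : ℝ → V) (S : Set ℝ) (c : ℝ) : Prop :=
  ∀ x ∈ S, ∀ y ∈ S, ‖deriv η x - deriv η y‖ ≤ c

/-- The integral over `[a, a + h]` of the increments `η (y + h) - η y`. Its direction serves as
an average of the tangents of `η` over `[a, a + 2 * h]`. -/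
def meanIncrement {V : Type*} [NormedAddCommGroup V] [NormedSpace ℝ V]
    (η : ℝ → V) (a h : ℝ) : V :=
  ∫ y in a..a + h, (η (y + h) - η y)

lemma TangentOscLE.mono {V : Type*} [NormedAddCommGroup V] [NormedSpace ℝ V] {η : ℝ → V}
    {S T : Set ℝ} {c d : ℝ} (h : TangentOscLE η T d) (hST : S ⊆ T) (hdc : d ≤ c) :
    TangentOscLE η S c :=
  fun x hx y hy => (h x (hST hx) y (hST hy)).trans hdc

section Curves

variable {V : Type*} [NormedAddCommGroup V] [InnerProductSpace ℝ V] {η : ℝ → V} {a b c h : ℝ}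

lemma mul_sub_le_inner_sub_of_le_inner_deriv (hη : Differentiable ℝ η) {e : V} (hab : a ≤ b)
    (hc : ∀ t ∈ Icc a b, c ≤ ⟪e, deriv η t⟫) : c * (b - a) ≤ ⟪e, η b - η a⟫ := by
  have hderiv (t : ℝ) : HasDerivAt (fun t => ⟪e, η t⟫) ⟪e, deriv η t⟫ t := by
    simpa using (hasDerivAt_const t e).inner ℝ (hη t).hasDerivAt
  rw [inner_sub_right]
  refine (convex_Icc a b).mul_sub_le_image_sub_of_le_deriv
    (continuous_iff_continuousAt.2 fun t => (hderiv t).continuousAt).continuousOn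
    (fun t _ => (hderiv t).differentiableAt.differentiableWithinAt) (fun t ht => ?_)
    a (left_mem_Icc.2 hab) b (right_mem_Icc.2 hab) hab
  rw [(hderiv t).deriv]
  exact hc t (interior_subset ht)

lemma mul_sq_le_inner_meanIncrement [CompleteSpace V] (hη : Differentiable ℝ η) {e : V}
    (hh : 0 ≤ h) (hc : ∀ t ∈ Icc a (a + 2 * h), c ≤ ⟪e, deriv η t⟫) :
    c * h ^ 2 ≤ ⟪e, meanIncrement η a h⟫ := by
  have hcont : Continuous fun y => η (y + h) - η y := by have := hη.continuous; fun_prop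
  have hincr : ∀ y ∈ Icc a (a + h), c * h ≤ ⟪e, η (y + h) - η y⟫ := fun y hy => by
    simpa using mul_sub_le_inner_sub_of_le_inner_deriv hη (e := e) (by linarith : y ≤ y + h)
      fun t ht => hc t ⟨hy.1.trans ht.1, by linarith [ht.2, hy.2]⟩
  calc c * h ^ 2 = ∫ _ in a..a + h, c * h := by
        rw [intervalIntegral.integral_const, smul_eq_mul]; ring
    _ ≤ ∫ y in a..a + h, ⟪e, η (y + h) - η y⟫ :=
        intervalIntegral.integral_mono_on (by linarith) (by simp)
          (Continuous.intervalIntegrable (by fun_prop) _ _) hincr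
    _ = ⟪e, meanIncrement η a h⟫ :=
        (innerSL ℝ e).intervalIntegral_comp_comm (hcont.intervalIntegrable _ _)

lemma norm_map_meanIncrement_le [CompleteSpace V] (hη : Continuous η) (P : V →L[ℝ] V)
    (hh : 0 ≤ h) (z : V) :
    ‖P (meanIncrement η a h)‖ ≤ ∫ y in a..a + 2 * h, ‖P (η y - z)‖ := by
  have hdev : Continuous fun y => ‖P (η y - z)‖ := by fun_prop
  have hint (c d : ℝ) : IntervalIntegrable (fun y => ‖P (η y - z)‖) volume c d :=
    hdev.intervalIntegrable _ _
  have hcont : Continuous fun y => η (y + h) - η y := by fun_prop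
  calc ‖P (meanIncrement η a h)‖ = ‖∫ y in a..a + h, P (η (y + h) - η y)‖ := by
        rw [meanIncrement, P.intervalIntegral_comp_comm (hcont.intervalIntegrable _ _)]
    _ ≤ ∫ y in a..a + h, (‖P (η (y + h) - z)‖ + ‖P (η y - z)‖) := by
        refine intervalIntegral.norm_integral_le_of_norm_le (by linarith)
          (Eventually.of_forall fun y _ => ?_) (Continuous.intervalIntegrable (by fun_prop) _ _)
        rw [← sub_sub_sub_cancel_right _ _ z, map_sub]
        exact norm_sub_le _ _
    _ = (∫ y in a..a + h, ‖P (η y - z)‖) + ∫ y in a + h..a + 2 * h, ‖P (η y - z)‖ := by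
        rw [intervalIntegral.integral_add (Continuous.intervalIntegrable (by fun_prop) _ _)
          (hint _ _), intervalIntegral.integral_comp_add_right (fun y => ‖P (η y - z)‖), add_comm]
        ring_nf
    _ = ∫ y in a..a + 2 * h, ‖P (η y - z)‖ :=
        intervalIntegral.integral_add_adjacent_intervals (hint _ _) (hint _ _)

namespace IsUnitSpeed_s2

variable (hη : IsUnitSpeed_s2 η)
include hη

lemma differentiable : Differentiable ℝ η := hη.contDiff.differentiable one_ne_zero

lemma continuous : Continuous η := hη.contDiff.continuous

lemma continuous_deriv : Continuous (deriv η) := hη.contDiff.continuous_deriv le_rfl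

lemma norm_sub_le (x y : ℝ) : ‖η y - η x‖ ≤ |y - x| := by
  simpa using convex_univ.norm_image_sub_le_of_norm_deriv_le (C := 1)
    (fun t _ => hη.differentiable t) (fun t _ => (hη.norm_deriv t).le) (mem_univ x) (mem_univ y)

lemma half_le_inner_deriv {S : Set ℝ} (hosc : TangentOscLE η S 1) {x y : ℝ} (hx : x ∈ S)
    (hy : y ∈ S) : 1 / 2 ≤ ⟪deriv η x, deriv η y⟫ :=
  half_le_inner_of_norm_sub_le_one (hη.norm_deriv x) (hη.norm_deriv y) (hosc x hx y hy)

lemma sub_le_two_mul_norm_sub (hab : a ≤ b) (hosc : TangentOscLE η (Icc a b) 1) :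
    b - a ≤ 2 * ‖η b - η a‖ := by
  have hinner : 1 / 2 * (b - a) ≤ ⟪deriv η a, η b - η a⟫ :=
    mul_sub_le_inner_sub_of_le_inner_deriv hη.differentiable hab
      fun t ht => hη.half_le_inner_deriv hosc (left_mem_Icc.2 hab) ht
  have hcs := real_inner_le_norm (deriv η a) (η b - η a)
  rw [hη.norm_deriv, one_mul] at hcs
  linarith

end IsUnitSpeed_s2

end Curves

/-- The distance of `η y` from the tangent line of `η` at `x`. -/
def normalDeviation {V : Type*} [NormedAddCommGroup V] [InnerProductSpace ℝ V]
    (η : ℝ → V) (x y : ℝ) : ℝ :=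
  ‖(ℝ ∙ deriv η x)ᗮ.starProjection (η y - η x)‖

/-- The tangent-point kernel with exponent `p` in the denominator, taken to be `0` where
`η y = η x`. -/
def tangentPointKernel {V : Type*} [NormedAddCommGroup V] [InnerProductSpace ℝ V]
    (p : ℝ) (η : ℝ → V) (x y : ℝ) : ℝ :=
  normalDeviation η x y ^ 2 / ‖η y - η x‖ ^ p

/-- The part of the tangent-point energy of `γ` due to tangents at parameters in `A` and points
at parameters in `B`, integrated with respect to arc length. -/
def interactionEnergy {V : Type*} [NormedAddCommGroup V] [InnerProductSpace ℝ V]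
    (p : ℝ) (γ : ℝ → V) (A B : Set ℝ) : ℝ≥0∞ :=
  ∫⁻ x in A, ∫⁻ y in B,
    ENNReal.ofReal (‖deriv γ x‖ * ‖deriv γ y‖ * tangentPointKernel p γ x y)

lemma sq_intervalIntegral_le {f : ℝ → ℝ} (hf : Continuous f) {a b : ℝ} (hab : a < b) :
    (∫ x in a..b, f x) ^ 2 ≤ (b - a) * ∫ x in a..b, f x ^ 2 := by
  set I := ∫ x in a..b, f x with hI
  have hvar : 0 ≤ ∫ x in a..b, ((b - a) * f x - I) ^ 2 :=
    intervalIntegral.integral_nonneg hab.le fun x _ => sq_nonneg _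
  have hexpand : ∫ x in a..b, ((b - a) * f x - I) ^ 2
      = (b - a) * ((b - a) * (∫ x in a..b, f x ^ 2) - I ^ 2) := by
    have hsplit : ∀ x, ((b - a) * f x - I) ^ 2
        = (b - a) ^ 2 * f x ^ 2 - 2 * (b - a) * I * f x + I ^ 2 := fun x => by ring
    simp_rw [hsplit]
    rw [intervalIntegral.integral_add (Continuous.intervalIntegrable (by fun_prop) _ _) (by simp),
      intervalIntegral.integral_sub (Continuous.intervalIntegrable (by fun_prop) _ _)
        (Continuous.intervalIntegrable (by fun_prop) _ _),
      intervalIntegral.integral_const_mul, intervalIntegral.integral_const_mul,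
      intervalIntegral.integral_const, ← hI, smul_eq_mul]
    ring
  rw [hexpand] at hvar
  linarith [nonneg_of_mul_nonneg_right hvar (sub_pos.2 hab)]

section Energy

variable {V : Type*} [NormedAddCommGroup V] [InnerProductSpace ℝ V] {η : ℝ → V}
  {p a b ρ E : ℝ} {A A' B B' : Set ℝ}

lemma tangentPointKernel_nonneg (p : ℝ) (η : ℝ → V) (x y : ℝ) : 0 ≤ tangentPointKernel p η x y := by
  unfold tangentPointKernel; positivity

lemma normalDeviation_le_norm_sub (η : ℝ → V) (x y : ℝ) : normalDeviation η x y ≤ ‖η y - η x‖ :=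
  Submodule.norm_starProjection_apply_le _ _

lemma normalDeviation_sq_le (hp : 0 ≤ p) {x y : ℝ} (hρ : ‖η y - η x‖ ≤ ρ) :
    normalDeviation η x y ^ 2 ≤ ρ ^ p * tangentPointKernel p η x y := by
  rcases (norm_nonneg (η y - η x)).eq_or_lt with hchord | hchord
  · have hzero : normalDeviation η x y = 0 :=
      le_antisymm (hchord ▸ normalDeviation_le_norm_sub η x y) (norm_nonneg _)
    simp [tangentPointKernel, hzero]
  · calc normalDeviation η x y ^ 2 = ‖η y - η x‖ ^ p * tangentPointKernel p η x y := by
          rw [tangentPointKernel, mul_div_cancel₀ _ (rpow_pos_of_pos hchord p).ne']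
      _ ≤ ρ ^ p * tangentPointKernel p η x y := by
          gcongr
          exact tangentPointKernel_nonneg p η x y

lemma interactionEnergy_mono (hA : A ⊆ A') (hB : B ⊆ B') :
    interactionEnergy p η A B ≤ interactionEnergy p η A' B' :=
  (lintegral_mono_set hA).trans (lintegral_mono fun _ => lintegral_mono_set hB)

namespace IsUnitSpeed_s2

variable (hη : IsUnitSpeed_s2 η)
include hη

lemma continuous_normalDeviation : Continuous fun z : ℝ × ℝ => normalDeviation η z.1 z.2 := by
  have hcont := hη.continuous
  have hcont' := hη.continuous_deriv
  simp only [normalDeviation, starProjection_orthogonal_span_singleton (hη.norm_deriv _)]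
  fun_prop

lemma measurable_tangentPointKernel :
    Measurable fun z : ℝ × ℝ => tangentPointKernel p η z.1 z.2 := by
  have hcont := hη.continuous
  have hchord : Continuous fun z : ℝ × ℝ => ‖η z.2 - η z.1‖ := by fun_prop
  exact (hη.continuous_normalDeviation.measurable.pow_const 2).div
    (hchord.measurable.pow_const p)

lemma interactionEnergy_eq : interactionEnergy p η A B
    = ∫⁻ x in A, ∫⁻ y in B, ENNReal.ofReal (tangentPointKernel p η x y) := by
  simp only [interactionEnergy, hη.norm_deriv, one_mul]

lemma exists_lintegral_tangentPointKernel_le (hab : a < b)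
    (hE : interactionEnergy p η (Ioc a b) B ≤ ENNReal.ofReal E) :
    ∃ x ∈ Ioc a b, ∫⁻ y in B, ENNReal.ofReal (tangentPointKernel p η x y)
      ≤ ENNReal.ofReal (E / (b - a)) := by
  have hmeas : Measurable fun x => ∫⁻ y in B, ENNReal.ofReal (tangentPointKernel p η x y) :=
    hη.measurable_tangentPointKernel.ennreal_ofReal.lintegral_prod_right'
  obtain ⟨x, hx, hle⟩ := exists_le_setLAverage (μ := volume) (s := Ioc a b)
    (by simpa using hab) (by simp) hmeas.aemeasurable
  refine ⟨x, hx, hle.trans ?_⟩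
  rw [setLAverage_eq, ← hη.interactionEnergy_eq, volume_Ioc,
    ENNReal.ofReal_div_of_pos (sub_pos.2 hab)]
  gcongr

lemma integral_normalDeviation_sq_le (hp : 0 ≤ p) (hE : 0 ≤ E) (hab : a ≤ b) {x : ℝ}
    (hx : x ∈ Icc a b) (hkernel : ∫⁻ y in Ioc a b, ENNReal.ofReal (tangentPointKernel p η x y)
      ≤ ENNReal.ofReal E) :
    ∫ y in a..b, normalDeviation η x y ^ 2 ≤ (b - a) ^ p * E := by
  have hpow : 0 ≤ (b - a) ^ p := rpow_nonneg (sub_nonneg.2 hab) p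
  have hcont : Continuous fun y => normalDeviation η x y ^ 2 :=
    (hη.continuous_normalDeviation.comp (Continuous.prodMk_right x)).pow 2
  have hbound : ∀ y ∈ Ioc a b, ENNReal.ofReal (normalDeviation η x y ^ 2)
      ≤ ENNReal.ofReal ((b - a) ^ p) * ENNReal.ofReal (tangentPointKernel p η x y) :=
    fun y hy => by
      rw [← ENNReal.ofReal_mul hpow]
      exact ENNReal.ofReal_le_ofReal <| normalDeviation_sq_le hp <| (hη.norm_sub_le x y).trans <|
        abs_sub_le_of_le_of_le hy.1.le hy.2 hx.1 hx.2
  refine (ENNReal.ofReal_le_ofReal_iff (mul_nonneg hpow hE)).1 ?_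
  calc ENNReal.ofReal (∫ y in a..b, normalDeviation η x y ^ 2)
      = ∫⁻ y in Ioc a b, ENNReal.ofReal (normalDeviation η x y ^ 2) := by
        rw [intervalIntegral.integral_of_le hab, ofReal_integral_eq_lintegral_ofReal
          (hcont.integrableOn_Ioc) (Eventually.of_forall fun y => sq_nonneg _)]
    _ ≤ ∫⁻ y in Ioc a b,
          ENNReal.ofReal ((b - a) ^ p) * ENNReal.ofReal (tangentPointKernel p η x y) :=
        setLIntegral_mono' measurableSet_Ioc hbound
    _ = ENNReal.ofReal ((b - a) ^ p)
          * ∫⁻ y in Ioc a b, ENNReal.ofReal (tangentPointKernel p η x y) :=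
        lintegral_const_mul' _ _ ENNReal.ofReal_ne_top
    _ ≤ ENNReal.ofReal ((b - a) ^ p * E) := by rw [ENNReal.ofReal_mul hpow]; gcongr

lemma exists_integral_normalDeviation_le {α : ℝ} (hα : 0 < α) (hE : 0 ≤ E) (hab : a < b)
    (henergy : interactionEnergy (2 * α + 4) η (Ioc a b) (Ioc a b) ≤ ENNReal.ofReal E) :
    ∃ x ∈ Ioc a b, ∫ y in a..b, normalDeviation η x y ≤ √E * (b - a) ^ (α + 2) := by
  have hlen : 0 < b - a := sub_pos.2 hab
  obtain ⟨x, hx, hkernel⟩ := hη.exists_lintegral_tangentPointKernel_le hab henergy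
  refine ⟨x, hx, le_of_sq_le_sq ?_ (by positivity)⟩
  calc (∫ y in a..b, normalDeviation η x y) ^ 2
      ≤ (b - a) * ∫ y in a..b, normalDeviation η x y ^ 2 := sq_intervalIntegral_le
        (hη.continuous_normalDeviation.comp (Continuous.prodMk_right x)) hab
    _ ≤ (b - a) * ((b - a) ^ (2 * α + 4) * (E / (b - a))) := by
        gcongr
        exact hη.integral_normalDeviation_sq_le (by positivity) (by positivity) hab.le
          (Ioc_subset_Icc_self hx) hkernel
    _ = E * ((b - a) ^ (α + 2)) ^ 2 := by
        rw [← rpow_mul_natCast hlen.le]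
        push_cast
        rw [show (α + 2) * 2 = 2 * α + 4 by ring]
        field_simp
    _ = (√E * (b - a) ^ (α + 2)) ^ 2 := by rw [mul_pow, sq_sqrt hE]

end IsUnitSpeed_s2

end Energy

/-- The constant in the Hölder estimate `IsUnitSpeed.tangentOscLE_of_interactionEnergy_le`. -/
def oscillationConst (α : ℝ) : ℝ := 128 / (1 - (1 / 2) ^ α)

lemma one_sub_half_rpow_pos {α : ℝ} (hα : 0 < α) : 0 < 1 - (1 / 2 : ℝ) ^ α :=
  sub_pos.2 (rpow_lt_one (by norm_num) (by norm_num) hα)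

lemma oscillationConst_ge {α : ℝ} (hα : 0 < α) : 128 ≤ oscillationConst α := by
  rw [oscillationConst, le_div_iff₀ (one_sub_half_rpow_pos hα)]
  linarith [rpow_nonneg (by norm_num : (0 : ℝ) ≤ 1 / 2) α]

lemma exists_dyadic_windows {a b p : ℝ} (hp : p ∈ Icc a b) :
    ∃ c d : ℕ → ℝ, c 0 = a ∧ d 0 = b ∧ Monotone c ∧ Antitone d ∧
      (∀ k, d k - c k = (b - a) * (1 / 2) ^ k) ∧
      Tendsto c atTop (𝓝 p) ∧ Tendsto d atTop (𝓝 p) := by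
  have hhalf : Tendsto (fun k : ℕ => (1 / 2 : ℝ) ^ k) atTop (𝓝 0) :=
    tendsto_pow_atTop_nhds_zero_of_lt_one (by norm_num) (by norm_num)
  have hanti {q : ℝ} (hq : 0 ≤ q) : Antitone fun k : ℕ => q * (1 / 2 : ℝ) ^ k :=
    (pow_right_anti₀ (by norm_num) (by norm_num)).const_mul hq
  refine ⟨fun k => p - (p - a) * (1 / 2) ^ k, fun k => p + (b - p) * (1 / 2) ^ k, by simp, by simp,
    fun k l hkl => sub_le_sub_left (hanti (sub_nonneg.2 hp.1) hkl) p,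
    fun k l hkl => add_le_add_right (hanti (sub_nonneg.2 hp.2) hkl) p, fun k => by ring, ?_, ?_⟩
  · simpa using tendsto_const_nhds.sub (hhalf.const_mul (p - a))
  · simpa using tendsto_const_nhds.add (hhalf.const_mul (b - p))

namespace IsUnitSpeed_s2

section Oscillation

variable {V : Type*} [NormedAddCommGroup V] [InnerProductSpace ℝ V] [CompleteSpace V]
  {η : ℝ → V} {a b a' b' E α : ℝ}

lemma mul_norm_deriv_sub_le_integral_normalDeviation (hη : IsUnitSpeed_s2 η) {S : Set ℝ} {h : ℝ}
    (hosc : TangentOscLE η S 1) (hh : 0 ≤ h) (hS : Icc a (a + 2 * h) ⊆ S) {x x' : ℝ}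
    (hx : x ∈ S) (hx' : x' ∈ S) :
    h ^ 2 / 2 * ‖deriv η x - deriv η x'‖ ≤ (∫ y in a..a + 2 * h, normalDeviation η x y)
      + ∫ y in a..a + 2 * h, normalDeviation η x' y := by
  have hinner : ∀ z ∈ S, h ^ 2 / 2 ≤ ⟪deriv η z, meanIncrement η a h⟫ := fun z hz => by
    have := mul_sq_le_inner_meanIncrement hη.differentiable hh
      fun t ht => hη.half_le_inner_deriv hosc hz (hS ht)
    linarith
  refine (mul_norm_sub_le_norm_starProjection_add (hη.norm_deriv x) (hη.norm_deriv x')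
    (by positivity) (hinner x hx) (hinner x' hx')).trans (add_le_add ?_ ?_)
  · exact norm_map_meanIncrement_le hη.continuous _ hh (η x)
  · exact norm_map_meanIncrement_le hη.continuous _ hh (η x')

lemma norm_deriv_sub_le_of_half_window (hη : IsUnitSpeed_s2 η) (hα : 0 < α)
    (hosc : TangentOscLE η (Icc a b) 1) (hab : a < b) (haa' : a ≤ a') (hbb' : b' ≤ b)
    (hhalf : b' - a' = (b - a) / 2) {x x' : ℝ} (hx : x ∈ Icc a b) (hx' : x' ∈ Icc a b)
    (hdev : ∫ y in a..b, normalDeviation η x y ≤ √E * (b - a) ^ (α + 2))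
    (hdev' : ∫ y in a'..b', normalDeviation η x' y ≤ √E * (b' - a') ^ (α + 2)) :
    ‖deriv η x - deriv η x'‖ ≤ 64 * √E * (b - a) ^ α := by
  have hlen : 0 < b - a := sub_pos.2 hab
  have hwindow : a' + 2 * ((b - a) / 4) = b' := by linarith
  have hmain := hη.mul_norm_deriv_sub_le_integral_normalDeviation hosc (h := (b - a) / 4)
    (by positivity) (hwindow ▸ Icc_subset_Icc haa' hbb') hx hx'
  rw [hwindow] at hmain
  have hsmall : ∫ y in a'..b', normalDeviation η x y ≤ √E * (b - a) ^ (α + 2) :=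
    (intervalIntegral.integral_mono_interval haa' (by linarith) hbb'
      (Eventually.of_forall fun y => norm_nonneg _) (Continuous.intervalIntegrable
        (hη.continuous_normalDeviation.comp (Continuous.prodMk_right x)) a b)).trans hdev
  have hsmall' : √E * (b' - a') ^ (α + 2) ≤ √E * (b - a) ^ (α + 2) := by
    gcongr; linarith
  have hsplit : (b - a) ^ (α + 2) = (b - a) ^ α * (b - a) ^ 2 := by
    exact_mod_cast rpow_add hlen α 2
  refine le_of_mul_le_mul_left ?_ (by positivity : 0 < ((b - a) / 4) ^ 2 / 2)
  rw [hsplit] at hsmall hsmall'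
  linarith

lemma norm_deriv_sub_le_of_dyadic_windows (hη : IsUnitSpeed_s2 η) (hα : 0 < α)
    (hosc : TangentOscLE η (Icc a b) 1) (hab : a < b) {g : ℝ → ℝ → ℝ}
    (hg : ∀ c d, a ≤ c → c < d → d ≤ b → g c d ∈ Ioc c d ∧
      ∫ y in c..d, normalDeviation η (g c d) y ≤ √E * (d - c) ^ (α + 2))
    {p : ℝ} (hp : p ∈ Icc a b) :
    ‖deriv η (g a b) - deriv η p‖ ≤ 64 * √E * (b - a) ^ α / (1 - (1 / 2) ^ α) := by
  have hlen : 0 < b - a := sub_pos.2 hab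
  obtain ⟨c, d, hc0, hd0, hc, hd, hdc, hcp, hdp⟩ := exists_dyadic_windows hp
  have hcd (k : ℕ) : c k < d k := sub_pos.1 (hdc k ▸ by positivity)
  have hac (k : ℕ) : a ≤ c k := hc0 ▸ hc k.zero_le
  have hdb (k : ℕ) : d k ≤ b := hd0 ▸ hd k.zero_le
  have hgk (k : ℕ) := hg (c k) (d k) (hac k) (hcd k) (hdb k)
  have hgp : Tendsto (fun k => g (c k) (d k)) atTop (𝓝 p) :=
    tendsto_of_tendsto_of_tendsto_of_le_of_le hcp hdp (fun k => (hgk k).1.1.le)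
      fun k => (hgk k).1.2
  have hstep (k : ℕ) : dist (deriv η (g (c k) (d k))) (deriv η (g (c (k + 1)) (d (k + 1))))
      ≤ 64 * √E * (b - a) ^ α * ((1 / 2) ^ α) ^ k := by
    rw [dist_eq_norm, mul_assoc (64 * √E), rpow_pow_comm (by norm_num),
      ← mul_rpow hlen.le (by positivity), ← hdc]
    exact hη.norm_deriv_sub_le_of_half_window hα (hosc.mono (Icc_subset_Icc (hac k) (hdb k)) le_rfl)
      (hcd k) (hc k.le_succ) (hd k.le_succ) (by rw [hdc, hdc, pow_succ]; ring)
      (Ioc_subset_Icc_self (hgk k).1)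
      (Icc_subset_Icc (hc k.le_succ) (hd k.le_succ) (Ioc_subset_Icc_self (hgk (k + 1)).1))
      (hgk k).2 (hgk (k + 1)).2
  have hlim := dist_le_of_le_geometric_of_tendsto₀ _ _
    (sub_pos.1 (one_sub_half_rpow_pos hα)) hstep ((hη.continuous_deriv.tendsto p).comp hgp)
  rwa [hc0, hd0, dist_eq_norm] at hlim

theorem tangentOscLE_of_interactionEnergy_le (hη : IsUnitSpeed_s2 η) (hα : 0 < α) (hE : 0 ≤ E)
    (hosc : TangentOscLE η (Icc a b) 1) (hab : a < b)
    (henergy : interactionEnergy (2 * α + 4) η (Ioc a b) (Ioc a b) ≤ ENNReal.ofReal E) :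
    TangentOscLE η (Icc a b) (oscillationConst α * √E * (b - a) ^ α) := by
  have hgood (c d : ℝ) : ∃ x, a ≤ c → c < d → d ≤ b → x ∈ Ioc c d ∧
      ∫ y in c..d, normalDeviation η x y ≤ √E * (d - c) ^ (α + 2) := by
    by_cases hcd : a ≤ c ∧ c < d ∧ d ≤ b
    · obtain ⟨x, hx⟩ := hη.exists_integral_normalDeviation_le hα hE hcd.2.1 <|
        (interactionEnergy_mono (Ioc_subset_Ioc hcd.1 hcd.2.2)
          (Ioc_subset_Ioc hcd.1 hcd.2.2)).trans henergy
      exact ⟨x, fun _ _ _ => hx⟩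
    · exact ⟨0, fun h₁ h₂ h₃ => absurd ⟨h₁, h₂, h₃⟩ hcd⟩
  choose g hg using hgood
  intro x hx y hy
  have hbound {p : ℝ} (hp : p ∈ Icc a b) :=
    hη.norm_deriv_sub_le_of_dyadic_windows hα hosc hab hg hp
  calc ‖deriv η x - deriv η y‖
      ≤ ‖deriv η x - deriv η (g a b)‖ + ‖deriv η (g a b) - deriv η y‖ :=
        norm_sub_le_norm_sub_add_norm_sub _ _ _
    _ ≤ 64 * √E * (b - a) ^ α / (1 - (1 / 2) ^ α)
        + 64 * √E * (b - a) ^ α / (1 - (1 / 2) ^ α) :=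
        add_le_add (norm_sub_rev (deriv η x) _ ▸ hbound hx) (hbound hy)
    _ = oscillationConst α * √E * (b - a) ^ α := by rw [oscillationConst]; ring

end Oscillation

end IsUnitSpeed_s2

/- Among the pairs at distance at least `δ`, take one with `y - x` minimal. All strictly shorter
pairs inside `[x, y]` are then at distance less than `δ`, so the midpoint gives oscillation at
most `2 * δ` over `[x, y]`. -/
lemma dist_lt_of_dist_le_two_mul {X : Type*} [PseudoMetricSpace X] {f : ℝ → X}
    (hf : Continuous f) {a b δ : ℝ} (hδ : 0 < δ)
    (himp : ∀ x y, a ≤ x → x < y → y ≤ b →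
      (∀ u ∈ Icc x y, ∀ v ∈ Icc x y, dist (f u) (f v) ≤ 2 * δ) → dist (f x) (f y) < δ)
    {x y : ℝ} (hx : x ∈ Icc a b) (hy : y ∈ Icc a b) : dist (f x) (f y) < δ := by
  wlog hxy : x ≤ y generalizing x y
  · rw [dist_comm]
    exact this hy hx (le_of_not_ge hxy)
  by_contra! hfar
  let K : Set (ℝ × ℝ) := (Icc a b ×ˢ Icc a b) ∩
    ({z | z.1 ≤ z.2} ∩ {z | δ ≤ dist (f z.1) (f z.2)})
  have hK : IsCompact K := (isCompact_Icc.prod isCompact_Icc).inter_right <|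
    (isClosed_le (by fun_prop) (by fun_prop)).inter (isClosed_le (by fun_prop) (by fun_prop))
  obtain ⟨⟨p, q⟩, ⟨⟨(hp : p ∈ Icc a b), (hq : q ∈ Icc a b)⟩, (hpq : p ≤ q),
      (hδpq : δ ≤ dist (f p) (f q))⟩, hmin⟩ :=
    hK.exists_isMinOn (f := fun z => z.2 - z.1) ⟨(x, y), ⟨hx, hy⟩, hxy, hfar⟩ (by fun_prop)
  have hpq' : p < q := hpq.lt_of_ne fun h => by rw [h, dist_self] at hδpq; linarith
  have hshort : ∀ u v, p ≤ u → u ≤ v → v ≤ q → v - u < q - p → dist (f u) (f v) < δ := by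
    intro u v hu huv hv hlt
    by_contra! hfar'
    have : q - p ≤ v - u := hmin (a := (u, v))
      ⟨⟨⟨hp.1.trans hu, by linarith [hq.2]⟩, ⟨by linarith [hp.1], hv.trans hq.2⟩⟩, huv, hfar'⟩
    linarith
  have hosc : ∀ u v, p ≤ u → u ≤ v → v ≤ q → dist (f u) (f v) ≤ 2 * δ := by
    intro u v hu huv hv
    have hleft := hshort u ((u + v) / 2) hu (by linarith) (by linarith) (by linarith)
    have hright := hshort ((u + v) / 2) v (by linarith) (by linarith) hv (by linarith)
    linarith [dist_triangle (f u) (f ((u + v) / 2)) (f v)]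
  refine (himp p q hp.1 hpq' hq.2 fun u hu v hv => ?_).not_ge hδpq
  rcases le_total u v with huv | hvu
  · exact hosc u v hu.1 huv hv.2
  · exact dist_comm (f u) (f v) ▸ hosc v u hv.1 hvu hu.2

namespace IsUnitSpeed_s2

section SmallEnergy

variable {V : Type*} [NormedAddCommGroup V] [InnerProductSpace ℝ V] [CompleteSpace V]
  {η : ℝ → V} {a b E α : ℝ}

lemma tangentOscLE_of_small_interactionEnergy (hη : IsUnitSpeed_s2 η) (hα : 0 < α) (hE : 0 ≤ E)
    (henergy : interactionEnergy (2 * α + 4) η (Ioc a b) (Ioc a b) ≤ ENNReal.ofReal E)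
    (hsmall : oscillationConst α * √E * (b - a) ^ α < 1 / 4) :
    TangentOscLE η (Icc a b) (1 / 4) := by
  intro x hx y hy
  rw [← dist_eq_norm]
  refine (dist_lt_of_dist_le_two_mul hη.continuous_deriv (by norm_num) ?_ hx hy).le
  intro x y hax hxy hyb hosc
  have hosc' : TangentOscLE η (Icc x y) 1 := fun u hu v hv => by
    rw [← dist_eq_norm]
    exact (hosc u hu v hv).trans (by norm_num)
  have hwindow : Ioc x y ⊆ Ioc a b := Ioc_subset_Ioc hax hyb
  calc dist (deriv η x) (deriv η y) = ‖deriv η x - deriv η y‖ := dist_eq_norm _ _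
    _ ≤ oscillationConst α * √E * (y - x) ^ α :=
        hη.tangentOscLE_of_interactionEnergy_le hα hE hosc' hxy
          ((interactionEnergy_mono hwindow hwindow).trans henergy)
          x (left_mem_Icc.2 hxy.le) y (right_mem_Icc.2 hxy.le)
    _ ≤ oscillationConst α * √E * (b - a) ^ α := by
        have := oscillationConst_ge hα
        gcongr
    _ < 1 / 4 := hsmall

lemma one_quarter_le_of_eq_endpoints (hη : IsUnitSpeed_s2 η) (hα : 0 < α) (hE : 0 ≤ E) (hab : a < b)
    (hends : η a = η b)
    (henergy : interactionEnergy (2 * α + 4) η (Ioc a b) (Ioc a b) ≤ ENNReal.ofReal E) :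
    1 / 4 ≤ oscillationConst α * √E * (b - a) ^ α := by
  by_contra! hsmall
  have hchord := hη.sub_le_two_mul_norm_sub hab.le <|
    (hη.tangentOscLE_of_small_interactionEnergy hα hE henergy hsmall).mono subset_rfl (by norm_num)
  rw [hends, sub_self, norm_zero] at hchord
  linarith

end SmallEnergy

end IsUnitSpeed_s2

section Periodic

lemma deriv_periodic {F : Type*} [NormedAddCommGroup F] [NormedSpace ℝ F] {f : ℝ → F} {T : ℝ}
    (hf : Function.Periodic f T) : Function.Periodic (deriv f) T := fun x => by
  rw [← deriv_comp_add_const, hf.funext]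

lemma setLIntegral_Ioc_add_eq_of_periodic {f : ℝ → ℝ≥0∞} {T : ℝ} (hf : Function.Periodic f T)
    (hT : 0 < T) (a b : ℝ) : ∫⁻ x in Ioc a (a + T), f x = ∫⁻ x in Ioc b (b + T), f x := by
  refine (isAddFundamentalDomain_Ioc hT a).setLIntegral_eq (isAddFundamentalDomain_Ioc hT b) f ?_
  rintro ⟨_, k, rfl⟩ x
  change f (k • T + x) = f x
  rw [add_comm, hf.zsmul k x]

lemma injOn_Ico_add_of_periodic {X : Type*} {f : ℝ → X} {T : ℝ} (hf : Function.Periodic f T)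
    (hT : 0 < T) {a : ℝ} (hinj : InjOn f (Ico a (a + T))) (b : ℝ) : InjOn f (Ico b (b + T)) := by
  have hmod (c x : ℝ) : f (toIcoMod hT c x) = f x := by
    rw [← self_sub_toIcoDiv_zsmul, hf.sub_zsmul_eq]
  intro x hx y hy hxy
  have hmods : toIcoMod hT a x = toIcoMod hT a y :=
    hinj (toIcoMod_mem_Ico hT a x) (toIcoMod_mem_Ico hT a y) (by rw [hmod, hmod, hxy])
  rwa [toIcoMod_inj, ← toIcoMod_inj hT (c := b), (toIcoMod_eq_self hT).2 hx,
    (toIcoMod_eq_self hT).2 hy] at hmods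

lemma interactionEnergy_Ioc_add_eq_of_periodic {V : Type*} [NormedAddCommGroup V]
    [InnerProductSpace ℝ V] {γ : ℝ → V} {T : ℝ} (hγ : Function.Periodic γ T) (hT : 0 < T)
    (p a b c d : ℝ) : interactionEnergy p γ (Ioc a (a + T)) (Ioc b (b + T))
      = interactionEnergy p γ (Ioc c (c + T)) (Ioc d (d + T)) := by
  have hγ' := deriv_periodic hγ
  calc interactionEnergy p γ (Ioc a (a + T)) (Ioc b (b + T))
      = interactionEnergy p γ (Ioc a (a + T)) (Ioc d (d + T)) :=
        lintegral_congr fun x => setLIntegral_Ioc_add_eq_of_periodic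
          (fun y => by simp only [tangentPointKernel, normalDeviation, hγ y, hγ' y]) hT b d
    _ = interactionEnergy p γ (Ioc c (c + T)) (Ioc d (d + T)) :=
        setLIntegral_Ioc_add_eq_of_periodic
          (fun x => by simp only [tangentPointKernel, normalDeviation, hγ x, hγ' x]) hT a c

lemma interactionEnergy_Ioc_le_of_periodic {V : Type*} [NormedAddCommGroup V]
    [InnerProductSpace ℝ V] {γ : ℝ → V} {T : ℝ} (hγ : Function.Periodic γ T) (hT : 0 < T)
    (p : ℝ) {a b c d : ℝ} (hab : b ≤ a + T) (hcd : d ≤ c + T) :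
    interactionEnergy p γ (Ioc a b) (Ioc c d) ≤ interactionEnergy p γ (Ioc 0 T) (Ioc 0 T) :=
  calc interactionEnergy p γ (Ioc a b) (Ioc c d)
      ≤ interactionEnergy p γ (Ioc a (a + T)) (Ioc c (c + T)) :=
        interactionEnergy_mono (Ioc_subset_Ioc_right hab) (Ioc_subset_Ioc_right hcd)
    _ = interactionEnergy p γ (Ioc 0 T) (Ioc 0 T) := by
        simpa using interactionEnergy_Ioc_add_eq_of_periodic hγ hT p a c 0 0

end Periodic

namespace IsUnitSpeed_s2

section DistantStrands

variable {V : Type*} [NormedAddCommGroup V] [InnerProductSpace ℝ V] {η : ℝ → V} {p q δ : ℝ}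

lemma ofReal_mul_le_interactionEnergy (hη : IsUnitSpeed_s2 η) {e k a b c d : ℝ} (hk : 0 ≤ k)
    (hab : a ≤ b) (h : ∀ x ∈ Ioc a b, ∀ y ∈ Ioc c d, k ≤ tangentPointKernel e η x y) :
    ENNReal.ofReal (k * (d - c) * (b - a)) ≤ interactionEnergy e η (Ioc a b) (Ioc c d) := by
  calc ENNReal.ofReal (k * (d - c) * (b - a))
      = ∫⁻ _ in Ioc a b, ∫⁻ _ in Ioc c d, ENNReal.ofReal k := by
        rw [setLIntegral_const, setLIntegral_const, volume_Ioc, volume_Ioc,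
          ENNReal.ofReal_mul' (sub_nonneg.2 hab), ENNReal.ofReal_mul hk]
    _ ≤ ∫⁻ x in Ioc a b, ∫⁻ y in Ioc c d, ENNReal.ofReal (tangentPointKernel e η x y) :=
        setLIntegral_mono' measurableSet_Ioc fun x hx =>
          setLIntegral_mono' measurableSet_Ioc fun y hy => ENNReal.ofReal_le_ofReal (h x hx y hy)
    _ = interactionEnergy e η (Ioc a b) (Ioc c d) := hη.interactionEnergy_eq.symm

lemma norm_increment_sub_le (hη : IsUnitSpeed_s2 η) {x y : ℝ} (hx : x ∈ Icc p (p + δ / 8))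
    (hy : y ∈ Icc q (q + δ / 8)) : ‖(η y - η x) - (η q - η p)‖ ≤ δ / 4 := by
  have hxp := (hη.norm_sub_le p x).trans_eq (abs_of_nonneg (sub_nonneg.2 hx.1))
  have hyq := (hη.norm_sub_le q y).trans_eq (abs_of_nonneg (sub_nonneg.2 hy.1))
  rw [sub_sub_sub_comm]
  linarith [_root_.norm_sub_le (η y - η q) (η x - η p), hx.2, hy.2]

lemma half_le_normalDeviation_of_perpendicular (hη : IsUnitSpeed_s2 η)
    (hδ : ‖η q - η p‖ = δ) (hperp : ⟪deriv η p, η q - η p⟫ = 0)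
    (hosc : TangentOscLE η (Icc p (p + δ / 8)) (1 / 4)) {x y : ℝ}
    (hx : x ∈ Icc p (p + δ / 8)) (hy : y ∈ Icc q (q + δ / 8)) :
    δ / 2 ≤ normalDeviation η x y := by
  have hinner : |⟪deriv η x, η q - η p⟫| ≤ δ / 4 := by
    calc |⟪deriv η x, η q - η p⟫| = |⟪deriv η x - deriv η p, η q - η p⟫| := by
          rw [inner_sub_left, hperp, sub_zero]
      _ ≤ ‖deriv η x - deriv η p‖ * ‖η q - η p‖ := abs_real_inner_le_norm _ _
      _ ≤ 1 / 4 * δ := by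
          rw [hδ]
          gcongr
          · exact hδ ▸ norm_nonneg _
          · exact hosc x hx p (left_mem_Icc.2 (hx.1.trans hx.2))
      _ = δ / 4 := by ring
  let P := (ℝ ∙ deriv η x)ᗮ.starProjection
  have hbase : δ - δ / 4 ≤ ‖P (η q - η p)‖ := by
    have := norm_sub_abs_inner_le_norm_starProjection (hη.norm_deriv x) (η q - η p)
    linarith
  have hdiff : ‖P (η q - η p)‖ - ‖P (η y - η x)‖ ≤ δ / 4 := by
    calc ‖P (η q - η p)‖ - ‖P (η y - η x)‖ ≤ ‖P (η y - η x) - P (η q - η p)‖ := by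
          rw [norm_sub_rev]; exact norm_sub_norm_le _ _
      _ ≤ ‖(η y - η x) - (η q - η p)‖ := by
          rw [← map_sub]; exact Submodule.norm_starProjection_apply_le _ _
      _ ≤ δ / 4 := hη.norm_increment_sub_le hx hy
  change δ / 2 ≤ ‖P (η y - η x)‖
  linarith

lemma one_le_of_perpendicular (hη : IsUnitSpeed_s2 η) {E α : ℝ} (hα : 0 < α) (hE : 0 ≤ E)
    (hδ : ‖η q - η p‖ = δ) (hδ_pos : 0 < δ) (hperp : ⟪deriv η p, η q - η p⟫ = 0)
    (hosc : TangentOscLE η (Icc p (p + δ / 8)) (1 / 4))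
    (henergy : interactionEnergy (2 * α + 4) η (Ioc p (p + δ / 8)) (Ioc q (q + δ / 8))
      ≤ ENNReal.ofReal E) :
    1 ≤ 64 * √E * (2 * δ) ^ α := by
  have hkernel : ∀ x ∈ Ioc p (p + δ / 8), ∀ y ∈ Ioc q (q + δ / 8),
      (δ / 2) ^ 2 / (2 * δ) ^ (2 * α + 4) ≤ tangentPointKernel (2 * α + 4) η x y := by
    intro x hx y hy
    have hx' := Ioc_subset_Icc_self hx
    have hy' := Ioc_subset_Icc_self hy
    have hchord : ‖η y - η x‖ ≤ 2 * δ := by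
      have := hη.norm_increment_sub_le hx' hy'
      have := norm_le_norm_add_norm_sub (η q - η p) (η y - η x)
      rw [norm_sub_rev (η q - η p)] at this
      linarith
    rw [div_le_iff₀' (by positivity)]
    calc (δ / 2) ^ 2 ≤ normalDeviation η x y ^ 2 := by
          gcongr
          exact hη.half_le_normalDeviation_of_perpendicular hδ hperp hosc hx' hy'
      _ ≤ (2 * δ) ^ (2 * α + 4) * tangentPointKernel (2 * α + 4) η x y :=
          normalDeviation_sq_le (by positivity) hchord
  have hlower := (hη.ofReal_mul_le_interactionEnergy (by positivity) (by linarith) hkernel).trans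
    henergy
  rw [ENNReal.ofReal_le_ofReal_iff hE, add_sub_cancel_left, add_sub_cancel_left] at hlower
  have hpow : (2 * δ) ^ (2 * α + 4) = ((2 * δ) ^ α) ^ 2 * (2 * δ) ^ 4 := by
    rw [rpow_add (by positivity), mul_comm 2 α, rpow_mul (by positivity)]
    norm_cast
  refine (one_le_sq_iff₀ (by positivity)).1 ?_
  rw [mul_pow, mul_pow, sq_sqrt hE]
  have hdiv : (δ / 2) ^ 2 / (2 * δ) ^ (2 * α + 4) * (δ / 8) * (δ / 8)
      = 1 / (64 ^ 2 * ((2 * δ) ^ α) ^ 2) := by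
    rw [hpow]
    field_simp
    norm_num
  rw [hdiv, div_le_iff₀ (by positivity)] at hlower
  linarith

end DistantStrands

end IsUnitSpeed_s2

/-- A closed `C¹` curve of length `L` in arc-length parametrization. -/
structure IsClosedUnitSpeed {V : Type*} [NormedAddCommGroup V] [InnerProductSpace ℝ V]
    (η : ℝ → V) (L : ℝ) : Prop extends IsUnitSpeed_s2 η where
  periodic : Function.Periodic η L
  length_pos : 0 < L

lemma inner_deriv_eq_zero_of_isLocalMin {V : Type*} [NormedAddCommGroup V]
    [InnerProductSpace ℝ V] {η : ℝ → V} {z : V} {t : ℝ} (hη : DifferentiableAt ℝ η t)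
    (hmin : IsLocalMin (fun x => ‖z - η x‖) t) : ⟪deriv η t, z - η t⟫ = 0 := by
  have hmin' : IsLocalMin (fun x => ‖z - η x‖ ^ 2) t :=
    hmin.mono fun x hx => pow_le_pow_left₀ (norm_nonneg _) hx 2
  have hderiv : HasDerivAt (fun x => ‖z - η x‖ ^ 2) (2 * ⟪z - η t, 0 - deriv η t⟫) t :=
    ((hasDerivAt_const t z).sub hη.hasDerivAt).norm_sq
  have hzero := hmin'.hasDerivAt_eq_zero hderiv
  rw [zero_sub, inner_neg_right, real_inner_comm] at hzero
  linarith

namespace IsClosedUnitSpeed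

variable {V : Type*} [NormedAddCommGroup V] [InnerProductSpace ℝ V] [CompleteSpace V]
  {η : ℝ → V} {L E α r : ℝ} (hη : IsClosedUnitSpeed η L) (hα : 0 < α) (hE : 0 ≤ E)
  (henergy : interactionEnergy (2 * α + 4) η (Ioc 0 L) (Ioc 0 L) ≤ ENNReal.ofReal E)
include hη hα hE henergy

lemma one_quarter_le_of_length : 1 / 4 ≤ oscillationConst α * √E * L ^ α := by
  simpa using hη.one_quarter_le_of_eq_endpoints hα hE hη.length_pos hη.periodic.eq.symm henergy

variable (hr : oscillationConst α * √E * r ^ α < 1 / 4)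
include hr

lemma lt_length_of_small : r < L := by
  have hL := hη.length_pos
  have hlong := hη.one_quarter_le_of_length hα hE henergy
  have := oscillationConst_ge hα
  by_contra! hLr
  have : oscillationConst α * √E * L ^ α ≤ oscillationConst α * √E * r ^ α := by gcongr
  linarith

lemma tangentOscLE_of_small {a b : ℝ} (hab : a ≤ b) (hbr : b - a ≤ r) :
    TangentOscLE η (Icc a b) (1 / 4) := by
  have hrL := hη.lt_length_of_small hα hE henergy hr
  have := oscillationConst_ge hα
  refine hη.tangentOscLE_of_small_interactionEnergy hα hE
    ((interactionEnergy_Ioc_le_of_periodic hη.periodic hη.length_pos _ (by linarith)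
      (by linarith)).trans henergy)
    (lt_of_le_of_lt ?_ hr)
  gcongr

lemma sub_le_two_mul_norm_sub_of_small {a b : ℝ} (hab : a ≤ b) (hbr : b - a ≤ r) :
    b - a ≤ 2 * ‖η b - η a‖ :=
  hη.sub_le_two_mul_norm_sub hab <|
    (hη.tangentOscLE_of_small hα hE henergy hr hab hbr).mono subset_rfl (by norm_num)

lemma quarter_le_norm_sub_of_perpendicular {p q : ℝ} (hpq : η p ≠ η q)
    (hperp : ⟪deriv η p, η q - η p⟫ = 0) : r / 4 ≤ ‖η q - η p‖ := by
  have hrL := hη.lt_length_of_small hα hE henergy hr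
  have hδ_pos : 0 < ‖η q - η p‖ := norm_pos_iff.2 (sub_ne_zero.2 hpq.symm)
  by_contra! hclose
  have hone := hη.one_le_of_perpendicular hα hE rfl hδ_pos hperp
    (hη.tangentOscLE_of_small hα hE henergy hr (by linarith) (by linarith))
    ((interactionEnergy_Ioc_le_of_periodic hη.periodic hη.length_pos _ (by linarith)
      (by linarith)).trans henergy)
  have hconst := oscillationConst_ge hα
  have : 64 * √E * (2 * ‖η q - η p‖) ^ α ≤ oscillationConst α * √E * r ^ α := by
    gcongr <;> linarith
  linarith

variable (hr_pos : 0 < r)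
include hr_pos

/- The distance from `η q` to a point of the strand attains its minimum. If it does so at an
interior parameter, the chord is perpendicular to the tangent there. -/
lemma quarter_le_norm_sub_of_far (hinj : InjOn η (Ico 0 L)) {p q : ℝ}
    (hp : p ∈ Icc (q + r / 2) (q + L - r / 2)) : r / 4 ≤ ‖η q - η p‖ := by
  have hinj' : InjOn η (Ico q (q + L)) :=
    injOn_Ico_add_of_periodic hη.periodic hη.length_pos (a := 0) (by rwa [zero_add]) q
  have hcont := hη.continuous
  obtain ⟨m, hm, hmin⟩ := isCompact_Icc.exists_isMinOn (f := fun t => ‖η q - η t‖) ⟨p, hp⟩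
    (by fun_prop)
  refine le_trans ?_ (hmin hp)
  rcases hm.1.eq_or_lt with rfl | hlt
  · have := hη.sub_le_two_mul_norm_sub_of_small hα hE henergy hr
      (a := q) (b := q + r / 2) (by linarith) (by linarith)
    rw [norm_sub_rev] at this
    linarith
  rcases hm.2.eq_or_lt with rfl | hgt
  · have := hη.sub_le_two_mul_norm_sub_of_small hα hE henergy hr
      (a := q + L - r / 2) (b := q + L) (by linarith) (by linarith)
    rw [hη.periodic q] at this
    linarith
  have hne : η m ≠ η q := fun h => by
    have := hinj' ⟨by linarith, by linarith⟩ ⟨le_rfl, by linarith⟩ h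
    linarith
  exact hη.quarter_le_norm_sub_of_perpendicular hα hE henergy hr hne <|
    inner_deriv_eq_zero_of_isLocalMin (hη.differentiable m)
      (hmin.isLocalMin (Icc_mem_nhds hlt hgt))

lemma min_sub_le_mul_norm_sub (hinj : InjOn η (Ico 0 L)) {p q : ℝ} (hqp : q ≤ p)
    (hpq : p ≤ q + L) : min (p - q) (L - (p - q)) ≤ 2 * (L / r) * ‖η p - η q‖ := by
  have hrL := hη.lt_length_of_small hα hE henergy hr
  have hratio : 1 ≤ L / r := (one_le_div hr_pos).2 hrL.le
  have hnear : 2 * ‖η p - η q‖ ≤ 2 * (L / r) * ‖η p - η q‖ := by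
    gcongr; linarith
  rcases le_total (p - q) (r / 2) with hleft | hleft
  · have := hη.sub_le_two_mul_norm_sub_of_small hα hE henergy hr hqp (by linarith)
    exact (min_le_left _ _).trans (by linarith)
  rcases le_total (L - (p - q)) (r / 2) with hright | hright
  · have := hη.sub_le_two_mul_norm_sub_of_small hα hE henergy hr hpq (by linarith)
    rw [hη.periodic q, norm_sub_rev] at this
    exact (min_le_right _ _).trans (by linarith)
  have hfar := hη.quarter_le_norm_sub_of_far hα hE henergy hr hr_pos hinj
    (p := p) (q := q) ⟨by linarith, by linarith⟩
  rw [norm_sub_rev] at hfar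
  calc min (p - q) (L - (p - q)) ≤ L / 2 := by
        rcases le_total (p - q) (L / 2) with h | h
        · exact (min_le_left _ _).trans h
        · exact (min_le_right _ _).trans (by linarith)
    _ = 2 * (L / r) * (r / 4) := by field_simp; norm_num
    _ ≤ 2 * (L / r) * ‖η p - η q‖ := by gcongr

end IsClosedUnitSpeed

/-- The constant in the scale-invariant distortion bound `IsClosedImmersion.distortion_le`. -/
def distortionConst (α : ℝ) : ℝ := 2 * (8 * oscillationConst α) ^ (1 / α)

lemma distortionConst_pos {α : ℝ} (hα : 0 < α) : 0 < distortionConst α := by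
  have := oscillationConst_ge hα
  unfold distortionConst
  positivity

namespace IsClosedUnitSpeed

variable {V : Type*} [NormedAddCommGroup V] [InnerProductSpace ℝ V] [CompleteSpace V]
  {η : ℝ → V} {L E α : ℝ} (hη : IsClosedUnitSpeed η L) (hα : 0 < α)
  (henergy : interactionEnergy (2 * α + 4) η (Ioc 0 L) (Ioc 0 L) ≤ ENNReal.ofReal E)
include hη hα henergy

lemma energy_pos : 0 < E := by
  by_contra! hE
  have hzero : interactionEnergy (2 * α + 4) η (Ioc 0 L) (Ioc 0 L) ≤ ENNReal.ofReal 0 := by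
    rwa [ENNReal.ofReal_of_nonpos hE, ← ENNReal.ofReal_zero] at henergy
  have := hη.one_quarter_le_of_length hα le_rfl hzero
  norm_num at this

/- The choice of scale is `oscillationConst α * √E * r ^ α = 1 / 8`. -/
lemma min_sub_le_distortionConst_mul_norm_sub (hinj : InjOn η (Ico 0 L)) {p q : ℝ} (hqp : q ≤ p)
    (hpq : p ≤ q + L) : min (p - q) (L - (p - q))
      ≤ distortionConst α * L * E ^ (1 / (2 * α)) * ‖η p - η q‖ := by
  have hE := hη.energy_pos hα henergy
  have hconst := oscillationConst_ge hα
  set R := (8 * oscillationConst α * √E) ^ (1 / α) with hR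
  have hR_pos : 0 < R := by positivity
  have hR_pow : R ^ α = 8 * oscillationConst α * √E := by
    rw [hR, one_div, rpow_inv_rpow (by positivity) hα.ne']
  have hsmall : oscillationConst α * √E * R⁻¹ ^ α < 1 / 4 := by
    rw [inv_rpow hR_pos.le, hR_pow, ← div_eq_mul_inv, div_lt_iff₀ (by positivity)]
    have : 0 < oscillationConst α * √E := by positivity
    linarith
  have hmain := hη.min_sub_le_mul_norm_sub hα hE.le henergy hsmall (inv_pos.2 hR_pos) hinj hqp hpq
  have hR_split : 2 * R = distortionConst α * E ^ (1 / (2 * α)) := by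
    rw [hR, mul_rpow (by positivity) (sqrt_nonneg E), sqrt_eq_rpow, ← rpow_mul hE.le,
      distortionConst, one_div_mul_one_div, mul_assoc]
  calc min (p - q) (L - (p - q)) ≤ 2 * (L / R⁻¹) * ‖η p - η q‖ := hmain
    _ = L * (2 * R) * ‖η p - η q‖ := by rw [div_inv_eq_mul]; ring
    _ = distortionConst α * L * E ^ (1 / (2 * α)) * ‖η p - η q‖ := by rw [hR_split]; ring

lemma min_abs_sub_le_distortionConst_mul_norm_sub (hinj : InjOn η (Ico 0 L)) {p q : ℝ}
    (hpq : |p - q| ≤ L) : min |p - q| (L - |p - q|)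
      ≤ distortionConst α * L * E ^ (1 / (2 * α)) * ‖η p - η q‖ := by
  wlog hqp : q ≤ p generalizing p q
  · rw [abs_sub_comm, norm_sub_rev]
    exact this (abs_sub_comm p q ▸ hpq) (le_of_not_ge hqp)
  rw [abs_of_nonneg (sub_nonneg.2 hqp)] at hpq ⊢
  exact hη.min_sub_le_distortionConst_mul_norm_sub hα henergy hinj hqp (by linarith)

end IsClosedUnitSpeed

section ChangeOfParameter

variable {V : Type*} [NormedAddCommGroup V] [InnerProductSpace ℝ V] {η : ℝ → V} {σ σ' : ℝ → ℝ}

lemma tangentPointKernel_comp (p : ℝ) {x : ℝ} (y : ℝ) (hη : DifferentiableAt ℝ η (σ x))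
    (hσ : HasDerivAt σ (σ' x) x) (hσ' : σ' x ≠ 0) :
    tangentPointKernel p (η ∘ σ) x y = tangentPointKernel p η (σ x) (σ y) := by
  simp only [tangentPointKernel, normalDeviation, Function.comp_apply,
    (hη.hasDerivAt.scomp x hσ).deriv, Submodule.span_singleton_smul_eq hσ'.isUnit]

lemma interactionEnergy_image (p : ℝ) (hη : Differentiable ℝ η)
    (hσ : ∀ x, HasDerivAt σ (σ' x) x) (hσ' : ∀ x, σ' x ≠ 0) (hinj : Function.Injective σ)
    {A B : Set ℝ} (hA : MeasurableSet A) (hB : MeasurableSet B) :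
    interactionEnergy p η (σ '' A) (σ '' B) = interactionEnergy p (η ∘ σ) A B := by
  have hsubst {S : Set ℝ} (hS : MeasurableSet S) (f : ℝ → ℝ≥0∞) :
      ∫⁻ x in σ '' S, f x = ∫⁻ x in S, ENNReal.ofReal |σ' x| * f (σ x) :=
    lintegral_image_eq_lintegral_abs_deriv_mul hS (fun x _ => (hσ x).hasDerivWithinAt)
      hinj.injOn f
  have hnorm (x : ℝ) : ‖deriv (η ∘ σ) x‖ = |σ' x| * ‖deriv η (σ x)‖ := by
    rw [((hη (σ x)).hasDerivAt.scomp x (hσ x)).deriv, norm_smul, norm_eq_abs]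
  simp only [interactionEnergy, hsubst hA, hsubst hB, ← lintegral_const_mul' _ _
    ENNReal.ofReal_ne_top, ← ENNReal.ofReal_mul (abs_nonneg _)]
  refine lintegral_congr fun x => lintegral_congr fun y => ?_
  rw [hnorm, hnorm, tangentPointKernel_comp p y (hη (σ x)) (hσ x) (hσ' x)]
  ring_nf

lemma interactionEnergy_congr_ae (p : ℝ) {A A' B B' : Set ℝ} (hA : A =ᵐ[volume] A')
    (hB : B =ᵐ[volume] B') : interactionEnergy p η A B = interactionEnergy p η A' B' := by
  simp only [interactionEnergy, Measure.restrict_congr_set hA, Measure.restrict_congr_set hB]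

end ChangeOfParameter

section ClosedCurves

variable {V : Type*} [NormedAddCommGroup V] [NormedSpace ℝ V] {γ : ℝ → V}

/-- An immersed closed `C¹` curve, given as a `1`-periodic map on the line. -/
structure IsClosedImmersion (γ : ℝ → V) : Prop where
  contDiff : ContDiff ℝ 1 γ
  periodic : Function.Periodic γ 1
  deriv_ne_zero : ∀ x, deriv γ x ≠ 0

/-- The length `L(γ)` of a closed curve. -/
def curveLength (γ : ℝ → V) : ℝ := ∫ x in I01, ‖deriv γ x‖

/-- The arc length of `γ` from `0` to `x`, negative for `x < 0`. -/
def arcLengthFun (γ : ℝ → V) (x : ℝ) : ℝ := ∫ t in (0 : ℝ)..x, ‖deriv γ t‖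

/-- The arc-length distance `d_γ(x, y)` along a closed curve. The index `k` counts how often the
arc from `x` to `y` winds around the circle. -/
def arcDistance (γ : ℝ → V) (x y : ℝ) : ℝ := ⨅ k : ℤ, |∫ t in x..(y + (k : ℝ)), ‖deriv γ t‖|

/-- The distortion of a closed curve, valued in `[0, ∞]`. -/
def distortion (γ : ℝ → V) : ℝ≥0∞ :=
  ⨆ (x ∈ I01) (y ∈ I01) (_ : x ≠ y), ENNReal.ofReal (arcDistance γ x y / ‖γ y - γ x‖)

lemma curveLength_eq_arcLengthFun_one (γ : ℝ → V) : curveLength γ = arcLengthFun γ 1 := by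
  rw [curveLength, arcLengthFun, I01, integral_Ico_eq_integral_Ioc,
    intervalIntegral.integral_of_le zero_le_one]

namespace IsClosedImmersion

variable (hγ : IsClosedImmersion γ)
include hγ

lemma continuous_deriv : Continuous (deriv γ) := hγ.contDiff.continuous_deriv le_rfl

lemma hasDerivAt (x : ℝ) : HasDerivAt γ (deriv γ x) x :=
  (hγ.contDiff.differentiable one_ne_zero x).hasDerivAt

lemma norm_deriv_pos (x : ℝ) : 0 < ‖deriv γ x‖ := norm_pos_iff.2 (hγ.deriv_ne_zero x)

lemma intervalIntegrable_norm_deriv (a b : ℝ) :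
    IntervalIntegrable (fun x => ‖deriv γ x‖) volume a b :=
  hγ.continuous_deriv.norm.intervalIntegrable a b

lemma periodic_norm_deriv : Function.Periodic (fun x => ‖deriv γ x‖) 1 :=
  (deriv_periodic hγ.periodic).comp _

lemma hasDerivAt_arcLengthFun (x : ℝ) : HasDerivAt (arcLengthFun γ) ‖deriv γ x‖ x :=
  (hγ.continuous_deriv.norm.integral_hasStrictDerivAt 0 x).hasDerivAt

lemma strictMono_arcLengthFun : StrictMono (arcLengthFun γ) :=
  strictMono_of_deriv_pos fun x => (hγ.hasDerivAt_arcLengthFun x).deriv ▸ hγ.norm_deriv_pos x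

lemma integral_norm_deriv_eq (x y : ℝ) :
    ∫ t in x..y, ‖deriv γ t‖ = arcLengthFun γ y - arcLengthFun γ x :=
  (intervalIntegral.integral_interval_sub_left (hγ.intervalIntegrable_norm_deriv 0 y)
    (hγ.intervalIntegrable_norm_deriv 0 x)).symm

lemma arcLengthFun_add_one (x : ℝ) : arcLengthFun γ (x + 1) = arcLengthFun γ x + curveLength γ := by
  have := hγ.periodic_norm_deriv.intervalIntegral_add_eq_add 0 x hγ.intervalIntegrable_norm_deriv
  rwa [zero_add, ← arcLengthFun, ← arcLengthFun, ← arcLengthFun,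
    ← curveLength_eq_arcLengthFun_one] at this

lemma curveLength_pos : 0 < curveLength γ := by
  rw [curveLength_eq_arcLengthFun_one]
  exact intervalIntegral.intervalIntegral_pos_of_pos (hγ.intervalIntegrable_norm_deriv 0 1)
    hγ.norm_deriv_pos one_pos

lemma surjective_arcLengthFun : Function.Surjective (arcLengthFun γ) := by
  have hcont : Continuous (arcLengthFun γ) :=
    continuous_iff_continuousAt.2 fun x => (hγ.hasDerivAt_arcLengthFun x).continuousAt
  have hint := hγ.intervalIntegrable_norm_deriv 0 1
  exact hcont.surjective
    (hγ.periodic_norm_deriv.tendsto_atTop_intervalIntegral_of_pos' hint hγ.norm_deriv_pos one_pos)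
    (hγ.periodic_norm_deriv.tendsto_atBot_intervalIntegral_of_pos' hint hγ.norm_deriv_pos one_pos)

/-- The arc length function as a monotone bijection of the line, whose inverse is the arc-length
parameter. -/
def arcLengthEquiv : ℝ ≃o ℝ :=
  hγ.strictMono_arcLengthFun.orderIsoOfSurjective _ hγ.surjective_arcLengthFun

/-- The parametrization of a closed curve by arc length. -/
def arcLengthReparam : ℝ → V := γ ∘ hγ.arcLengthEquiv.symm

lemma arcLengthReparam_arcLengthFun (x : ℝ) : hγ.arcLengthReparam (arcLengthFun γ x) = γ x :=
  congrArg γ (hγ.arcLengthEquiv.symm_apply_apply x)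

lemma arcLengthFun_arcLengthEquiv_symm (t : ℝ) : arcLengthFun γ (hγ.arcLengthEquiv.symm t) = t :=
  hγ.arcLengthEquiv.apply_symm_apply t

lemma arcLengthEquiv_symm_add_curveLength (t : ℝ) :
    hγ.arcLengthEquiv.symm (t + curveLength γ) = hγ.arcLengthEquiv.symm t + 1 := by
  apply hγ.strictMono_arcLengthFun.injective
  rw [hγ.arcLengthFun_add_one, hγ.arcLengthFun_arcLengthEquiv_symm,
    hγ.arcLengthFun_arcLengthEquiv_symm]

lemma hasDerivAt_arcLengthReparam (t : ℝ) :
    HasDerivAt hγ.arcLengthReparam (‖deriv γ (hγ.arcLengthEquiv.symm t)‖⁻¹ •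
      deriv γ (hγ.arcLengthEquiv.symm t)) t :=
  (hγ.hasDerivAt _).scomp t <| HasDerivAt.of_local_left_inverse
    hγ.arcLengthEquiv.symm.continuous.continuousAt (hγ.hasDerivAt_arcLengthFun _)
    (hγ.norm_deriv_pos _).ne' (Eventually.of_forall hγ.arcLengthFun_arcLengthEquiv_symm)

lemma periodic_arcLengthReparam : Function.Periodic hγ.arcLengthReparam (curveLength γ) := fun t =>
  (congrArg γ (hγ.arcLengthEquiv_symm_add_curveLength t)).trans (hγ.periodic _)

lemma arcLengthFun_image_Ioc : arcLengthFun γ '' Ioc 0 1 = Ioc 0 (curveLength γ) := by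
  have hzero : arcLengthFun γ 0 = 0 := intervalIntegral.integral_same
  have himage : arcLengthFun γ '' Ioc 0 1 = Ioc (arcLengthFun γ 0) (arcLengthFun γ 1) :=
    hγ.arcLengthEquiv.image_Ioc 0 1
  rw [himage, hzero, ← curveLength_eq_arcLengthFun_one]

lemma injOn_arcLengthReparam (hinj : InjOn γ I01) :
    InjOn hγ.arcLengthReparam (Ico 0 (curveLength γ)) := by
  have hzero : hγ.arcLengthEquiv.symm 0 = 0 :=
    (hγ.arcLengthEquiv.symm_apply_eq).2 intervalIntegral.integral_same.symm
  have hone : hγ.arcLengthEquiv.symm (curveLength γ) = 1 := by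
    simpa [hzero] using hγ.arcLengthEquiv_symm_add_curveLength 0
  refine hinj.comp hγ.arcLengthEquiv.symm.injective.injOn fun t ht => ?_
  rw [I01, ← hzero, ← hone]
  exact ⟨hγ.arcLengthEquiv.symm.monotone ht.1, hγ.arcLengthEquiv.symm.strictMono ht.2⟩

lemma abs_arcLengthFun_sub_le {x y : ℝ} (hx : x ∈ I01) (hy : y ∈ I01) :
    |arcLengthFun γ y - arcLengthFun γ x| ≤ curveLength γ := by
  have hlength {u v : ℝ} (hu : u ∈ I01) (hv : v ∈ I01) :
      arcLengthFun γ v - arcLengthFun γ u ≤ curveLength γ := by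
    rw [sub_le_iff_le_add', ← hγ.arcLengthFun_add_one]
    exact hγ.strictMono_arcLengthFun.monotone (by linarith [hu.1, hv.2])
  exact abs_sub_le_iff.2 ⟨hlength hx hy, hlength hy hx⟩

lemma arcDistance_le_abs_sub (x y : ℝ) (k : ℤ) :
    arcDistance γ x y ≤ |arcLengthFun γ (y + k) - arcLengthFun γ x| := by
  rw [← hγ.integral_norm_deriv_eq]
  exact ciInf_le ⟨0, forall_mem_range.2 fun _ => abs_nonneg _⟩ k

lemma arcDistance_le_min {x y : ℝ} (hx : x ∈ I01) (hy : y ∈ I01) :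
    arcDistance γ x y ≤ min |arcLengthFun γ y - arcLengthFun γ x|
      (curveLength γ - |arcLengthFun γ y - arcLengthFun γ x|) := by
  have hlength := abs_le.1 (hγ.abs_arcLengthFun_sub_le hx hy)
  have hdirect := hγ.arcDistance_le_abs_sub x y 0
  have hforward := hγ.arcDistance_le_abs_sub x y 1
  have hbackward := hγ.arcDistance_le_abs_sub x y (-1)
  have hshift := hγ.arcLengthFun_add_one (y + ((-1 : ℤ) : ℝ))
  push_cast at hdirect hforward hbackward hshift
  rw [add_zero] at hdirect
  rw [neg_add_cancel_right] at hshift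
  rw [hγ.arcLengthFun_add_one, abs_of_nonneg (by linarith)] at hforward
  rw [abs_of_nonpos (by linarith)] at hbackward
  refine le_min hdirect ?_
  rcases abs_cases (arcLengthFun γ y - arcLengthFun γ x) with h | h <;> linarith

lemma norm_sub_le_arcDistance [CompleteSpace V] (x y : ℝ) : ‖γ y - γ x‖ ≤ arcDistance γ x y := by
  refine le_ciInf fun k => ?_
  have hwind : γ (y + k) = γ y := by simpa using hγ.periodic.int_mul k y
  rw [← hwind, ← intervalIntegral.integral_eq_sub_of_hasDerivAt (fun t _ => hγ.hasDerivAt t)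
    (hγ.continuous_deriv.intervalIntegrable _ _)]
  exact intervalIntegral.norm_integral_le_abs_integral_norm

lemma one_le_distortion [CompleteSpace V] (hinj : InjOn γ I01) : 1 ≤ distortion γ := by
  have hx : (0 : ℝ) ∈ I01 := ⟨le_rfl, one_pos⟩
  have hy : (1 / 2 : ℝ) ∈ I01 := by constructor <;> norm_num
  have hxy : (0 : ℝ) ≠ 1 / 2 := by norm_num
  have hchord : 0 < ‖γ (1 / 2) - γ 0‖ := norm_sub_pos_iff.2 (hinj.ne hy hx hxy.symm)
  refine le_trans ?_ (le_iSup₂_of_le (0 : ℝ) hx (le_iSup₂_of_le (1 / 2 : ℝ) hy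
    (le_iSup_of_le hxy le_rfl)))
  rw [ENNReal.one_le_ofReal, one_le_div hchord]
  exact hγ.norm_sub_le_arcDistance 0 (1 / 2)

end IsClosedImmersion

end ClosedCurves

section TangentPointEnergy

variable {V : Type*} [NormedAddCommGroup V] [InnerProductSpace ℝ V] {γ : ℝ → V} {s : ℝ}

/-- The tangent-point energy with the paper's exponent, `2 s + 1` in terms of the kernel
`tangentPointKernel`. -/
def tangentPointEnergy (s : ℝ) (γ : ℝ → V) : ℝ≥0∞ := interactionEnergy (2 * s + 1) γ I01 I01

namespace IsClosedImmersion

variable (hγ : IsClosedImmersion γ)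
include hγ

lemma isClosedUnitSpeed_arcLengthReparam :
    IsClosedUnitSpeed hγ.arcLengthReparam (curveLength γ) where
  contDiff := by
    have hderiv : deriv hγ.arcLengthReparam = fun t => ‖deriv γ (hγ.arcLengthEquiv.symm t)‖⁻¹ •
        deriv γ (hγ.arcLengthEquiv.symm t) :=
      funext fun t => (hγ.hasDerivAt_arcLengthReparam t).deriv
    have htangent := hγ.continuous_deriv.comp hγ.arcLengthEquiv.symm.continuous
    rw [contDiff_one_iff_deriv, hderiv]
    exact ⟨fun t => (hγ.hasDerivAt_arcLengthReparam t).differentiableAt,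
      (htangent.norm.inv₀ fun t => (hγ.norm_deriv_pos _).ne').smul htangent⟩
  norm_deriv t := by
    rw [(hγ.hasDerivAt_arcLengthReparam t).deriv, norm_smul, norm_inv, norm_norm,
      inv_mul_cancel₀ (hγ.norm_deriv_pos _).ne']
  periodic := hγ.periodic_arcLengthReparam
  length_pos := hγ.curveLength_pos

lemma interactionEnergy_arcLengthReparam (s : ℝ) :
    interactionEnergy (2 * s + 1) hγ.arcLengthReparam (Ioc 0 (curveLength γ))
      (Ioc 0 (curveLength γ)) = tangentPointEnergy s γ := by
  have hcomp : hγ.arcLengthReparam ∘ arcLengthFun γ = γ :=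
    funext hγ.arcLengthReparam_arcLengthFun
  rw [← hγ.arcLengthFun_image_Ioc, interactionEnergy_image _
    hγ.isClosedUnitSpeed_arcLengthReparam.differentiable hγ.hasDerivAt_arcLengthFun
    (fun x => (hγ.norm_deriv_pos x).ne') hγ.strictMono_arcLengthFun.injective
    measurableSet_Ioc measurableSet_Ioc, hcomp]
  exact interactionEnergy_congr_ae _ Ico_ae_eq_Ioc.symm Ico_ae_eq_Ioc.symm

variable [CompleteSpace V]

lemma arcDistance_div_le (hs : 3 / 2 < s) (hinj : InjOn γ I01) {E : ℝ}
    (henergy : tangentPointEnergy s γ ≤ ENNReal.ofReal E) {x y : ℝ} (hx : x ∈ I01) (hy : y ∈ I01)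
    (hxy : x ≠ y) : arcDistance γ x y / ‖γ y - γ x‖
      ≤ distortionConst (s - 3 / 2) * curveLength γ * E ^ (1 / (2 * (s - 3 / 2))) := by
  have hexponent : 2 * (s - 3 / 2) + 4 = 2 * s + 1 := by ring
  rw [← hγ.interactionEnergy_arcLengthReparam, ← hexponent] at henergy
  rw [div_le_iff₀ (norm_sub_pos_iff.2 (hinj.ne hy hx hxy.symm))]
  refine (hγ.arcDistance_le_min hx hy).trans ?_
  simpa only [hγ.arcLengthReparam_arcLengthFun] using
    hγ.isClosedUnitSpeed_arcLengthReparam.min_abs_sub_le_distortionConst_mul_norm_sub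
      (sub_pos.2 hs) henergy (hγ.injOn_arcLengthReparam hinj) (hγ.abs_arcLengthFun_sub_le hx hy)

lemma distortion_le (hs : 3 / 2 < s) (hinj : InjOn γ I01) :
    distortion γ ≤ ENNReal.ofReal (distortionConst (s - 3 / 2)) * ENNReal.ofReal (curveLength γ) *
      tangentPointEnergy s γ ^ (1 / (2 * (s - 3 / 2))) := by
  have hα : 0 < s - 3 / 2 := sub_pos.2 hs
  have hconst := distortionConst_pos hα
  have hlength := hγ.curveLength_pos
  have hexponent : 0 < 1 / (2 * (s - 3 / 2)) := by positivity
  by_cases htop : tangentPointEnergy s γ = ⊤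
  · rw [htop, ENNReal.top_rpow_of_pos hexponent, ENNReal.mul_top (by simp [hconst, hlength])]
    exact le_top
  set E := (tangentPointEnergy s γ).toReal
  have hE : tangentPointEnergy s γ = ENNReal.ofReal E := (ENNReal.ofReal_toReal htop).symm
  rw [hE, ENNReal.ofReal_rpow_of_nonneg ENNReal.toReal_nonneg hexponent.le,
    ← ENNReal.ofReal_mul hconst.le, ← ENNReal.ofReal_mul (by positivity)]
  exact iSup₂_le fun x hx => iSup₂_le fun y hy => iSup_le fun hxy =>
    ENNReal.ofReal_le_ofReal (hγ.arcDistance_div_le hs hinj hE.le hx hy hxy)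

lemma distortion_le_rpow (hs : 3 / 2 < s) (hinj : InjOn γ I01) {κ : ℝ} (hκ : 1 ≤ κ) :
    distortion γ ≤ ENNReal.ofReal (distortionConst (s - 3 / 2) ^ κ) *
      ENNReal.ofReal (curveLength γ ^ κ) * tangentPointEnergy s γ ^ (κ / (2 * (s - 3 / 2))) := by
  have hκ_nonneg : 0 ≤ κ := zero_le_one.trans hκ
  have hbound := hγ.distortion_le hs hinj
  refine (hbound.trans (ENNReal.le_rpow_self_of_one_le
    ((hγ.one_le_distortion hinj).trans hbound) hκ)).trans_eq ?_
  rw [ENNReal.mul_rpow_of_nonneg _ _ hκ_nonneg, ENNReal.mul_rpow_of_nonneg _ _ hκ_nonneg,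
    ENNReal.ofReal_rpow_of_nonneg (distortionConst_pos (sub_pos.2 hs)).le hκ_nonneg,
    ENNReal.ofReal_rpow_of_nonneg hγ.curveLength_pos.le hκ_nonneg, ← ENNReal.rpow_mul,
    one_div_mul_eq_div]

end IsClosedImmersion

end TangentPointEnergy

section EuclideanSpace

variable {n : ℕ} {γ : ℝ → En n}

lemma norm_sub_DDg_self (γ : ℝ → En n) (x y : ℝ) :
    ‖γ y - γ x - DDg γ γ x (γ y - γ x)‖ = normalDeviation γ x y := by
  rw [normalDeviation, Submodule.starProjection_orthogonal_val,
    Submodule.starProjection_singleton, DDg, div_eq_inv_mul]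
  rfl

lemma norm_Rop_sq_mul_muW (s : ℝ) (γ : ℝ → En n) (x y : ℝ) :
    ‖Rop s γ γ x y‖ ^ 2 * muW γ x y
      = ‖deriv γ x‖ * ‖deriv γ y‖ * tangentPointKernel (2 * s + 1) γ x y := by
  rw [Rop, muW, norm_smul, norm_sub_DDg_self, norm_inv,
    norm_of_nonneg (rpow_nonneg (norm_nonneg _) s), tangentPointKernel]
  rcases (norm_nonneg (γ y - γ x)).eq_or_lt with hchord | hchord
  · have hzero : normalDeviation γ x y = 0 :=
      le_antisymm (hchord ▸ normalDeviation_le_norm_sub γ x y) (norm_nonneg _)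
    simp [hzero]
  · have hpow : ‖γ y - γ x‖ ^ (2 * s + 1) = (‖γ y - γ x‖ ^ s) ^ 2 * ‖γ y - γ x‖ := by
      rw [rpow_add_one hchord.ne', mul_comm 2 s, rpow_mul hchord.le, rpow_two]
    rw [hpow]
    field_simp

lemma EtpE_eq_tangentPointEnergy (s : ℝ) (γ : ℝ → En n) : EtpE s γ = tangentPointEnergy s γ := by
  simp only [EtpE, tangentPointEnergy, interactionEnergy, norm_Rop_sq_mul_muW]

end EuclideanSpace

theorem statement2_general {V : Type*} [NormedAddCommGroup V] [InnerProductSpace ℝ V]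
    [CompleteSpace V] {γ : ℝ → V} {s : ℝ} (hs : 3 / 2 < s) (hγ : IsClosedImmersion γ)
    (hinj : InjOn γ I01) :
    distortion γ ≤
      ENNReal.ofReal (distortionConst (s - 3 / 2) ^ ((s - 3 / 2 + 1) / (s - 3 / 2))) *
        ENNReal.ofReal (curveLength γ ^ ((s - 3 / 2 + 1) / (s - 3 / 2))) *
        tangentPointEnergy s γ ^ ((s - 3 / 2 + 1) / (2 * (s - 3 / 2) ^ 2)) := by
  have hα : 0 < s - 3 / 2 := sub_pos.2 hs
  have hκ : 1 ≤ (s - 3 / 2 + 1) / (s - 3 / 2) := (one_le_div hα).2 (by linarith)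
  have hβ : (s - 3 / 2 + 1) / (2 * (s - 3 / 2) ^ 2)
      = (s - 3 / 2 + 1) / (s - 3 / 2) / (2 * (s - 3 / 2)) := by rw [div_div]; ring_nf
  rw [hβ]
  exact hγ.distortion_le_rpow hs hinj hκ

/-- uniform distortion estimate: for `s ∈ (3/2,2)`, `α = s - 3/2` and
`β = (α+1)/(2α²)` there is `0 < C < ∞`, depending only on `s`, such that every
injective `C¹` immersion `γ : 𝕋 → ℝⁿ` satisfies
`distor(γ) ≤ C · L(γ)^{(α+1)/α} · E(γ)^β`. -/
theorem statement2 (s : ℝ) (hs : s ∈ Set.Ioo (3 / 2 : ℝ) 2) :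
    ∃ C : ℝ, 0 < C ∧ ∀ (n : ℕ), 2 ≤ n → ∀ γ : ℝ → En n,
      Function.Periodic γ 1 → ContDiff ℝ 1 γ → Set.InjOn γ I01 → (∀ x, deriv γ x ≠ 0) →
      distorE γ ≤ ENNReal.ofReal C *
          ENNReal.ofReal (arcLen γ ^ ((s - 3 / 2 + 1) / (s - 3 / 2))) *
          EtpE s γ ^ ((s - 3 / 2 + 1) / (2 * (s - 3 / 2) ^ 2)) := by
  refine ⟨distortionConst (s - 3 / 2) ^ ((s - 3 / 2 + 1) / (s - 3 / 2)),
    rpow_pos_of_pos (distortionConst_pos (sub_pos.2 hs.1)) _,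
    fun n _ γ hper hdiff hinj hderiv => ?_⟩
  rw [EtpE_eq_tangentPointEnergy]
  exact statement2_general hs.1 ⟨hdiff, hper, hderiv⟩ hinj
end
end
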